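/- arXiv:1907.03913 — 3 statements merged into one kernel-verified Lean document; each statement's English description precedes it below -/
import Mathlib

section
/- Let n ≥ 4 be an even integer. If G is an n-vertex 3-chromatic 2-connected simple graph, then i_2(G) ≤ C(n,2) − (n+1), with equality if and only if G is isomorphic to a theta graph θ_{a,b,c} with a + b + c = n + 1 in which at least one of a, b, c is even. -/
open SimpleGraph

/-- The number of independent sets of size `t` in `G`. -/
noncomputable def numIndepSize {V : Type*} [Fintype V] (G : SimpleGraph V) (t : ℕ) : ℕ :=
  Nat.card {s : Finset V // s.card = t ∧ ∀ a ∈ s, ∀ b ∈ s, ¬ G.Adj a b}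

/-- `G` is `ℓ`-connected: it has more than `ℓ` vertices and deleting any set of fewer than
`ℓ` vertices leaves a connected graph. -/
def LConnected {V : Type*} [Fintype V] (G : SimpleGraph V) (ℓ : ℕ) : Prop :=
  ℓ < Fintype.card V ∧
    ∀ s : Finset V, s.card < ℓ → (G.induce ((↑s : Set V)ᶜ)).Connected

/-- `G` is (equal to) the theta graph `θ_{a,b,c}`: there are two distinct vertices `v`, `w`
joined by three internally disjoint, pairwise edge-disjoint paths of lengths `a`, `b`, `c`,
and these paths exhaust all vertices and edges of `G`. -/
def IsTheta {V : Type*} (G : SimpleGraph V) (a b c : ℕ) : Prop :=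
  ∃ (v w : V) (_ : v ≠ w) (p q r : G.Walk v w),
    p.IsPath ∧ q.IsPath ∧ r.IsPath ∧
    p.length = a ∧ q.length = b ∧ r.length = c ∧
    (∀ x, x ∈ p.support → x ∈ q.support → x = v ∨ x = w) ∧
    (∀ x, x ∈ p.support → x ∈ r.support → x = v ∨ x = w) ∧
    (∀ x, x ∈ q.support → x ∈ r.support → x = v ∨ x = w) ∧
    p.edges.Disjoint q.edges ∧ p.edges.Disjoint r.edges ∧ q.edges.Disjoint r.edges ∧
    (∀ x : V, x ∈ p.support ∨ x ∈ q.support ∨ x ∈ r.support) ∧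
    (∀ e ∈ G.edgeSet, e ∈ p.edges ∨ e ∈ q.edges ∨ e ∈ r.edges)

/- In an odd cycle that misses a vertex (one exists since `n` is even), 2-connectedness provides an
ear, and the cycle together with the ear is a theta graph `H ⊆ G` with `e(H) = v(H) + 1`, two of
whose paths have lengths of different parity. Since `G` is connected with minimum degree at least
two, comparing degree sums shows that `e - v` is strictly larger for `G` than for any nonempty
proper subgraph. Hence `e(G) ≥ n + 1`, with equality only if `G = H`. -/

section IndependentPairs

lemma numIndepSize_two_add_ncard_edgeSet {V : Type*} [Fintype V] (G : SimpleGraph V) :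
    numIndepSize G 2 + G.edgeSet.ncard = (Fintype.card V).choose 2 := by
  classical
  let IsIndep (s : Finset V) : Prop := ∀ a ∈ s, ∀ b ∈ s, ¬ G.Adj a b
  have hindep :
      numIndepSize G 2 = {s ∈ (Finset.univ : Finset V).powersetCard 2 | IsIndep s}.card := by
    rw [numIndepSize, Nat.card_eq_fintype_card, Fintype.card_subtype]
    congr 1
    ext s
    simp [IsIndep, Finset.mem_powersetCard]
  have hedges : G.edgeFinset.image Sym2.toFinset =
      {s ∈ (Finset.univ : Finset V).powersetCard 2 | ¬ IsIndep s} := by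
    ext s
    simp only [Finset.mem_image, mem_edgeFinset, Sym2.exists, mem_edgeSet, Finset.mem_filter,
      Finset.mem_powersetCard, Finset.subset_univ, true_and, Finset.card_eq_two]
    constructor
    · rintro ⟨a, b, hab, rfl⟩
      exact ⟨⟨a, b, hab.ne, Sym2.toFinset_mk_eq⟩,
        fun h => h a (by simp) b (by simp) hab⟩
    · rintro ⟨⟨a, b, -, rfl⟩, h⟩
      refine ⟨a, b, ?_, Sym2.toFinset_mk_eq⟩
      by_contra hab
      exact h (by simp [IsIndep, hab, G.adj_comm b a])
  have hinj : Function.Injective (Sym2.toFinset : Sym2 V → Finset V) := fun e f h => by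
    ext x
    rw [← Sym2.mem_toFinset, h, Sym2.mem_toFinset]
  rw [hindep, ← coe_edgeFinset, Set.ncard_coe_finset, ← Finset.card_image_of_injective _ hinj,
    hedges, Finset.card_filter_add_card_filter_not, Finset.card_powersetCard, Finset.card_univ]

end IndependentPairs

section Subgraphs

variable {V : Type*} {G : SimpleGraph V}

lemma exists_adj_mem_notMem (hG : G.Preconnected) {S : Set V} (hne : S.Nonempty)
    (hS : S ≠ Set.univ) : ∃ y ∈ S, ∃ x ∉ S, G.Adj y x := by
  obtain ⟨s, hs⟩ := hne
  obtain ⟨t, ht⟩ := (Set.ne_univ_iff_exists_notMem S).1 hS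
  obtain ⟨W⟩ := hG s t
  obtain ⟨d, -, hfst, hsnd⟩ := W.exists_boundary_dart S hs ht
  exact ⟨d.fst, hfst, d.snd, hsnd, d.adj⟩

lemma exists_adj_not_subgraph_adj (hG : G.Preconnected) {H : G.Subgraph} (hne : H.verts.Nonempty)
    (hH : H ≠ ⊤) : ∃ y ∈ H.verts, ∃ x, G.Adj y x ∧ ¬ H.Adj y x := by
  by_cases hspan : H.verts = Set.univ
  · by_contra! hadj
    refine hH (Subgraph.ext hspan ?_)
    ext y x
    exact ⟨fun h => h.adj_sub, hadj y (hspan ▸ Set.mem_univ y) x⟩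
  · obtain ⟨y, hy, x, hx, hyx⟩ := exists_adj_mem_notMem hG hne hspan
    exact ⟨y, hy, x, hyx, fun h => hx h.snd_mem⟩

lemma two_mul_ncard_edgeSet_add_lt [Fintype V] [DecidableRel G.Adj] (hG : G.Preconnected) {d : ℕ}
    (hdeg : ∀ v, d ≤ G.degree v) {H : G.Subgraph} (hne : H.verts.Nonempty) (hH : H ≠ ⊤) :
    2 * H.edgeSet.ncard + d * H.vertsᶜ.ncard < 2 * G.edgeSet.ncard := by
  classical
  have hsumH : ∑ x, H.degree x = 2 * H.edgeSet.ncard := by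
    simp_rw [← Subgraph.degree_spanningCoe, sum_degrees_eq_twice_card_edges,
      ← H.edgeSet_spanningCoe, ← coe_edgeFinset, Set.ncard_coe_finset]
  have hsumG : ∑ x, G.degree x = 2 * G.edgeSet.ncard := by
    rw [sum_degrees_eq_twice_card_edges, ← coe_edgeFinset, Set.ncard_coe_finset]
  have hsumC : ∑ x, (if x ∈ H.verts then 0 else d) = d * H.vertsᶜ.ncard := by
    rw [Finset.sum_ite, Finset.sum_const_zero, zero_add, Finset.sum_const, smul_eq_mul, mul_comm,
      Set.ncard_eq_toFinset_card']
    congr 2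
    ext x
    simp
  rw [← hsumH, ← hsumC, ← hsumG, ← Finset.sum_add_distrib]
  obtain ⟨y, hy, x, hyx, hHyx⟩ := exists_adj_not_subgraph_adj hG hne hH
  refine Finset.sum_lt_sum (fun v _ => ?_) ⟨y, Finset.mem_univ y, ?_⟩
  · split_ifs with hv
    · exact H.degree_le v
    · simpa [H.degree_of_notMem_verts hv] using hdeg v
  · rw [if_pos hy, add_zero, ← Subgraph.finset_card_neighborSet_eq_degree,
      ← card_neighborFinset_eq_degree]
    exact Finset.card_lt_card (Finset.ssubset_iff_of_subset
      (fun v hv => by simpa using (Set.mem_toFinset.1 hv).adj_sub) |>.2 ⟨x, by simpa, by simpa⟩)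

end Subgraphs

section OddCycles

variable {V : Type*} {G : SimpleGraph V}

lemma even_length_cons_of_isPath
    (hG : ∀ (x : V) (c : G.Walk x x), c.IsCycle → Even c.length) {u v : V} (h : G.Adj u v)
    {p : G.Walk v u} (hp : p.IsPath) : Even (Walk.cons h p).length := by
  by_cases he : s(u, v) ∈ p.edges
  · rw [Walk.length_cons, hp.length_eq_one_of_mem_edges (Sym2.eq_swap ▸ he)]
    exact even_two
  · exact hG u _ ((Walk.cons_isCycle_iff p h).2 ⟨hp, he⟩)

lemma even_length_add_length_bypass [DecidableEq V]
    (hG : ∀ (x : V) (c : G.Walk x x), c.IsCycle → Even c.length) {u v : V} (p : G.Walk u v) :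
    Even (p.length + p.bypass.length) := by
  induction p with
  | nil => simp [Walk.bypass]
  | @cons u w v h p ih =>
    rw [Walk.bypass]
    split_ifs with hu
    · have hloop := even_length_cons_of_isPath hG h (p.bypass_isPath.takeUntil hu)
      have hsplit := congrArg Walk.length (p.bypass.take_spec hu)
      simp only [Walk.length_cons, Walk.length_append] at hloop hsplit ⊢
      grind
    · simp only [Walk.length_cons]
      grind

theorem exists_isCycle_odd_length (hG : ¬ G.Colorable 2) :
    ∃ (u : V) (c : G.Walk u u), c.IsCycle ∧ Odd c.length := by
  classical
  by_contra! heven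
  simp only [Nat.not_odd_iff_even] at heven
  refine hG (two_colorable_iff_forall_loop_even.2 fun u w => ?_)
  have hbypass : w.bypass.length = 0 :=
    Walk.length_eq_zero_iff.2 ((Walk.isPath_iff_nil).1 w.bypass_isPath)
  simpa [hbypass] using even_length_add_length_bypass heven w

end OddCycles

section Theta

variable {V : Type*} {G : SimpleGraph V} {v w : V}

/-- Walks with common ends that share no other vertex and no edge. Edge-disjointness is not
automatic: a single edge, traversed by both walks, has no inner vertex. -/
structure InternallyDisjoint (p q : G.Walk v w) : Prop where
  eq_or_eq : ∀ x, x ∈ p.support → x ∈ q.support → x = v ∨ x = w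
  edges_disjoint : p.edges.Disjoint q.edges

/-- The three paths of a theta graph contained in `G`, without requiring that they exhaust `G`. -/
structure IsThetaSystem (p q r : G.Walk v w) : Prop where
  ne : v ≠ w
  isPath₁ : p.IsPath
  isPath₂ : q.IsPath
  isPath₃ : r.IsPath
  disjoint₁₂ : InternallyDisjoint p q
  disjoint₁₃ : InternallyDisjoint p r
  disjoint₂₃ : InternallyDisjoint q r

/-- The subgraph formed by three walks with common ends; for a theta system, the theta graph
itself. -/
def thetaSubgraph (p q r : G.Walk v w) : G.Subgraph :=
  p.toSubgraph ⊔ q.toSubgraph ⊔ r.toSubgraph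

lemma mem_verts_thetaSubgraph {p q r : G.Walk v w} {x : V} :
    x ∈ (thetaSubgraph p q r).verts ↔ x ∈ p.support ∨ x ∈ q.support ∨ x ∈ r.support := by
  simp [thetaSubgraph, or_assoc]

lemma mem_edgeSet_thetaSubgraph {p q r : G.Walk v w} {e : Sym2 V} :
    e ∈ (thetaSubgraph p q r).edgeSet ↔ e ∈ p.edges ∨ e ∈ q.edges ∨ e ∈ r.edges := by
  simp [thetaSubgraph, or_assoc]

lemma subgraph_eq_top_iff {H : G.Subgraph} :
    H = ⊤ ↔ (∀ x, x ∈ H.verts) ∧ ∀ e ∈ G.edgeSet, e ∈ H.edgeSet := by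
  constructor
  · rintro rfl
    exact ⟨fun _ => trivial, fun _ he => he⟩
  · rintro ⟨hverts, hedges⟩
    exact top_unique ⟨fun x _ => hverts x, fun x y hxy => hedges s(x, y) hxy⟩

lemma isTheta_iff {a b c : ℕ} :
    IsTheta G a b c ↔ ∃ (v w : V) (p q r : G.Walk v w), IsThetaSystem p q r ∧
      p.length = a ∧ q.length = b ∧ r.length = c ∧ thetaSubgraph p q r = ⊤ := by
  simp only [subgraph_eq_top_iff, mem_verts_thetaSubgraph, mem_edgeSet_thetaSubgraph]
  constructor
  · rintro ⟨v, w, hvw, p, q, r, hp, hq, hr, ha, hb, hc, vpq, vpr, vqr, epq, epr, eqr, htop⟩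
    exact ⟨v, w, p, q, r, ⟨hvw, hp, hq, hr, ⟨vpq, epq⟩, ⟨vpr, epr⟩, ⟨vqr, eqr⟩⟩, ha, hb, hc, htop⟩
  · rintro ⟨v, w, p, q, r, ⟨hvw, hp, hq, hr, ⟨vpq, epq⟩, ⟨vpr, epr⟩, ⟨vqr, eqr⟩⟩, ha, hb, hc, htop⟩
    exact ⟨v, w, hvw, p, q, r, hp, hq, hr, ha, hb, hc, vpq, vpr, vqr, epq, epr, eqr, htop⟩

namespace IsThetaSystem

variable {p q r : G.Walk v w}

lemma ncard_verts (h : IsThetaSystem p q r) :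
    (thetaSubgraph p q r).verts.ncard + 1 = p.length + q.length + r.length := by
  classical
  have hverts : (thetaSubgraph p q r).verts =
      ↑(p.support.toFinset ∪ q.support.toFinset ∪ r.support.toFinset) := by
    ext x
    simp [mem_verts_thetaSubgraph]
  have hcard {s : G.Walk v w} (hs : s.IsPath) : s.support.toFinset.card = s.length + 1 := by
    rw [List.toFinset_card_of_nodup hs.support_nodup, Walk.length_support]
  have hpq : p.support.toFinset ∩ q.support.toFinset = {v, w} := by
    ext x
    have := h.disjoint₁₂.eq_or_eq x
    simp only [Finset.mem_inter, List.mem_toFinset, Finset.mem_insert, Finset.mem_singleton]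
    grind [Walk.start_mem_support, Walk.end_mem_support]
  have hpqr : (p.support.toFinset ∪ q.support.toFinset) ∩ r.support.toFinset = {v, w} := by
    ext x
    have := h.disjoint₁₃.eq_or_eq x
    have := h.disjoint₂₃.eq_or_eq x
    simp only [Finset.mem_inter, Finset.mem_union, List.mem_toFinset, Finset.mem_insert,
      Finset.mem_singleton]
    grind [Walk.start_mem_support, Walk.end_mem_support]
  have hcard₁₂ := Finset.card_union_add_card_inter p.support.toFinset q.support.toFinset
  have hcard₁₂₃ := Finset.card_union_add_card_inter
    (p.support.toFinset ∪ q.support.toFinset) r.support.toFinset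
  rw [hpq, Finset.card_pair h.ne, hcard h.isPath₁, hcard h.isPath₂] at hcard₁₂
  rw [hpqr, Finset.card_pair h.ne, hcard h.isPath₃] at hcard₁₂₃
  rw [hverts, Set.ncard_coe_finset]
  omega

lemma ncard_edgeSet (h : IsThetaSystem p q r) :
    (thetaSubgraph p q r).edgeSet.ncard = p.length + q.length + r.length := by
  classical
  have hedges : (thetaSubgraph p q r).edgeSet =
      ↑(p.edges ++ q.edges ++ r.edges).toFinset := by
    ext e
    simp [mem_edgeSet_thetaSubgraph]
  have hnodup : (p.edges ++ q.edges ++ r.edges).Nodup :=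
    (h.isPath₁.edges_nodup.append h.isPath₂.edges_nodup h.disjoint₁₂.edges_disjoint).append
      h.isPath₃.edges_nodup (List.disjoint_append_left.2
        ⟨h.disjoint₁₃.edges_disjoint, h.disjoint₂₃.edges_disjoint⟩)
  rw [hedges, Set.ncard_coe_finset, List.toFinset_card_of_nodup hnodup]
  simp only [List.length_append, Walk.length_edges]

end IsThetaSystem

lemma IsTheta.ncard_edgeSet {a b c : ℕ} (h : IsTheta G a b c) :
    G.edgeSet.ncard = a + b + c := by
  obtain ⟨v, w, p, q, r, hθ, rfl, rfl, rfl, htop⟩ := isTheta_iff.1 h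
  rw [← hθ.ncard_edgeSet, htop, Subgraph.edgeSet_top]

end Theta

section Ears

variable {V : Type*} {G : SimpleGraph V} {y z : V}

/-- An open ear of the vertex set `S`: a path between distinct vertices of `S` whose inner vertices
lie outside `S`. The last field excludes the path consisting of a single edge. -/
structure IsEar (S : Set V) (p : G.Walk y z) : Prop where
  ne : y ≠ z
  start_mem : y ∈ S
  end_mem : z ∈ S
  isPath : p.IsPath
  eq_or_eq : ∀ x ∈ p.support, x ∈ S → x = y ∨ x = z
  exists_notMem : ∀ e ∈ p.edges, ∃ x ∈ e, x ∉ S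

lemma IsEar.internallyDisjoint {S : Set V} {p q : G.Walk y z} (hp : IsEar S p)
    (hq : ∀ x ∈ q.support, x ∈ S) : InternallyDisjoint p q where
  eq_or_eq x hxp hxq := hp.eq_or_eq x hxp (hq x hxq)
  edges_disjoint e hep heq := by
    obtain ⟨x, hxe, hxS⟩ := hp.exists_notMem e hep
    exact hxS (hq x (Walk.mem_support_of_mem_edges heq hxe))

lemma exists_internallyDisjoint_of_isCycle {c : G.Walk y y} (hc : c.IsCycle) (hz : z ∈ c.support)
    (hyz : y ≠ z) :
    ∃ q r : G.Walk y z, q.IsPath ∧ r.IsPath ∧ InternallyDisjoint q r ∧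
      q.length + r.length = c.length ∧ q.support ⊆ c.support ∧ r.support ⊆ c.support := by
  classical
  have hspec := c.take_spec hz
  refine ⟨c.takeUntil z hz, (c.dropUntil z hz).reverse, hc.isPath_takeUntil hz, ?_, ⟨?_, ?_⟩, ?_,
    c.support_takeUntil_subset_support hz, ?_⟩
  · rw [Walk.isPath_reverse_iff]
    exact (hspec.symm ▸ hc).isPath_of_append_right (Walk.not_nil_of_ne hyz)
  · intro x hx hx'
    by_contra! hne
    have hnodup := hc.support_nodup
    rw [← hspec, Walk.tail_support_append] at hnodup
    rw [Walk.support_reverse, List.mem_reverse] at hx'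
    exact List.disjoint_of_nodup_append hnodup
      (((Walk.mem_support_iff _).1 hx).resolve_left hne.1)
      (((Walk.mem_support_iff _).1 hx').resolve_left hne.2)
  · simpa using hc.isTrail.disjoint_edges_takeUntil_dropUntil hz
  · rw [Walk.length_reverse, ← Walk.length_append, hspec]
  · intro x hx
    exact c.support_dropUntil_subset_support hz (by simpa using hx)

end Ears

namespace LConnected

variable {V : Type*} [Fintype V] {G : SimpleGraph V} {ℓ : ℕ}

lemma exists_isPath_forall_notMem (hG : LConnected G ℓ) {s : Finset V} (hs : s.card < ℓ) {u v : V}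
    (hu : u ∉ s) (hv : v ∉ s) : ∃ p : G.Walk u v, p.IsPath ∧ ∀ x ∈ p.support, x ∉ s := by
  obtain ⟨W, hW⟩ := (hG.2 s hs).exists_isPath ⟨u, by simpa⟩ ⟨v, by simpa⟩
  refine ⟨W.map (Embedding.induce (G := G) (↑s : Set V)ᶜ).toHom,
    hW.map (Embedding.induce (G := G) (↑s : Set V)ᶜ).injective, ?_⟩
  intro x hx
  have hxW : x ∈ W.support.map Subtype.val := (W.support_map (Embedding.induce _).toHom) ▸ hx
  obtain ⟨⟨x, hxs⟩, -, rfl⟩ := List.mem_map.1 hxW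
  simpa using hxs

lemma preconnected (hG : LConnected G ℓ) (hℓ : 0 < ℓ) : G.Preconnected := fun u v => by
  obtain ⟨p, -⟩ := hG.exists_isPath_forall_notMem (s := ∅) hℓ (Finset.notMem_empty u)
    (Finset.notMem_empty v)
  exact p.reachable

lemma le_degree [DecidableRel G.Adj] (hG : LConnected G ℓ) (v : V) : ℓ ≤ G.degree v := by
  classical
  by_contra! hlt
  have hcard : (insert v (G.neighborFinset v)).card < Fintype.card V :=
    ((Finset.card_insert_le _ _).trans hlt).trans_lt hG.1
  obtain ⟨w, hw⟩ := Finset.exists_mem_notMem_of_card_lt_card (Finset.card_univ (α := V) ▸ hcard)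
  obtain ⟨hwv, hw⟩ : w ≠ v ∧ w ∉ G.neighborFinset v := by simpa using hw
  obtain ⟨p, -, hp⟩ := hG.exists_isPath_forall_notMem hlt (G.notMem_neighborFinset_self v) hw
  refine hp p.snd (p.getVert_mem_support 1) ((G.mem_neighborFinset v _).2 ?_)
  exact p.adj_snd (Walk.not_nil_of_ne hwv.symm)

lemma ncard_edgeSet_add_card_lt (hG : LConnected G 2) {H : G.Subgraph} (hne : H.verts.Nonempty)
    (hH : H ≠ ⊤) : H.edgeSet.ncard + Fintype.card V < G.edgeSet.ncard + H.verts.ncard := by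
  classical
  have hlt := two_mul_ncard_edgeSet_add_lt (hG.preconnected two_pos) hG.le_degree hne hH
  have hcompl := Set.ncard_add_ncard_compl H.verts
  rw [Nat.card_eq_fintype_card] at hcompl
  omega

theorem exists_isEar (hG : LConnected G 2) {S : Set V} (hS : S.Nontrivial) (hS' : S ≠ Set.univ) :
    ∃ (y z : V) (p : G.Walk y z), IsEar S p := by
  classical
  obtain ⟨y, hy, x, hx, hyx⟩ := exists_adj_mem_notMem (hG.preconnected two_pos) hS.nonempty hS'
  obtain ⟨t, ht, hty⟩ := hS.exists_ne y
  obtain ⟨W, hW, hWy⟩ := hG.exists_isPath_forall_notMem (s := {y}) (by simp) (u := x) (v := t)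
    (by simpa using hyx.ne') (by simpa using hty)
  obtain ⟨z, hz, hzW, hfirst⟩ := W.exists_mem_support_forall_mem_support_imp_eq S.toFinset
    ⟨t, by simpa using ht⟩
  simp only [Set.mem_toFinset] at hz hfirst
  have hyP : y ∉ (W.takeUntil z hzW).support := fun h =>
    hWy y (W.support_takeUntil_subset_support hzW h) (Finset.mem_singleton_self y)
  refine ⟨y, z, Walk.cons hyx (W.takeUntil z hzW), ?_, hy, hz,
    (Walk.cons_isPath_iff _ _).2 ⟨hW.takeUntil hzW, hyP⟩, ?_, ?_⟩
  · rintro rfl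
    exact hyP (Walk.end_mem_support _)
  · intro a ha haS
    rw [Walk.support_cons, List.mem_cons] at ha
    exact ha.imp_right (hfirst a haS)
  · intro e he
    rw [Walk.edges_cons, List.mem_cons] at he
    rcases he with rfl | he
    · exact ⟨x, Sym2.mem_mk_right y x, hx⟩
    · induction e with
      | _ a b =>
        by_contra! hS
        have ha := hfirst a (hS a (by simp)) (Walk.fst_mem_support_of_mem_edges _ he)
        have hb := hfirst b (hS b (by simp)) (Walk.snd_mem_support_of_mem_edges _ he)
        exact (Walk.adj_of_mem_edges _ he).ne (ha.trans hb.symm)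

theorem exists_isThetaSystem [DecidableEq V] (hG : LConnected G 2) {u : V} {c : G.Walk u u}
    (hc : c.IsCycle) (hham : ¬ c.IsHamiltonianCycle) :
    ∃ (y z : V) (p q r : G.Walk y z), IsThetaSystem p q r ∧ q.length + r.length = c.length := by
  have hnontriv : {x | x ∈ c.support}.Nontrivial :=
    ⟨u, c.start_mem_support, c.snd, c.getVert_mem_support 1, (c.adj_snd hc.not_nil).ne⟩
  have hproper : {x | x ∈ c.support} ≠ Set.univ := by
    refine fun hall => hham ⟨hc, hc.isPath_tail.isHamiltonian_of_mem fun x => ?_⟩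
    rw [Walk.support_tail_of_not_nil _ hc.not_nil]
    rcases (Walk.mem_support_iff _).1 (Set.eq_univ_iff_forall.1 hall x) with rfl | hx
    · exact c.end_mem_tail_support hc.not_nil
    · exact hx
  obtain ⟨y, z, p, hp⟩ := hG.exists_isEar hnontriv hproper
  have hy : y ∈ c.support := hp.start_mem
  obtain ⟨q, r, hq, hr, hqr, hlen, hqc, hrc⟩ := exists_internallyDisjoint_of_isCycle
    (hc.rotate hy) ((c.mem_support_rotate_iff y hy).2 hp.end_mem) hp.ne
  exact ⟨y, z, p, q, r, ⟨hp.ne, hp.isPath, hq, hr,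
    hp.internallyDisjoint fun x hx => (c.mem_support_rotate_iff y hy).1 (hqc hx),
    hp.internallyDisjoint fun x hx => (c.mem_support_rotate_iff y hy).1 (hrc hx), hqr⟩,
    by simpa using hlen⟩

end LConnected

theorem max_indep_pairs_even_general {V : Type*} [Fintype V] (n : ℕ) (heven : Even n)
    (G : SimpleGraph V) (hcard : Fintype.card V = n) (hcol : ¬ G.Colorable 2)
    (hconn : LConnected G 2) :
    numIndepSize G 2 ≤ Nat.choose n 2 - (n + 1) ∧
      (numIndepSize G 2 = Nat.choose n 2 - (n + 1) ↔
        ∃ a b c : ℕ, a + b + c = n + 1 ∧ (Even a ∨ Even b ∨ Even c) ∧ IsTheta G a b c) := by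
  classical
  subst hcard
  obtain ⟨u, C, hC, hodd⟩ := exists_isCycle_odd_length hcol
  have hham : ¬ C.IsHamiltonianCycle := fun h =>
    Nat.not_even_iff_odd.2 hodd (h.length_eq ▸ heven)
  obtain ⟨v, w, p, q, r, hθ, hlen⟩ := hconn.exists_isThetaSystem hC hham
  have hverts := hθ.ncard_verts
  have hedges := hθ.ncard_edgeSet
  have hpairs := numIndepSize_two_add_ncard_edgeSet G
  by_cases htop : thetaSubgraph p q r = ⊤
  · have hIsTheta : IsTheta G p.length q.length r.length :=
      isTheta_iff.2 ⟨v, w, p, q, r, hθ, rfl, rfl, rfl, htop⟩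
    have hparity : Even q.length ∨ Even r.length := by grind
    rw [htop, Subgraph.verts_top, Set.ncard_univ, Nat.card_eq_fintype_card] at hverts
    have hG := hIsTheta.ncard_edgeSet
    exact ⟨by omega, fun _ => ⟨_, _, _, hverts.symm, Or.inr hparity, hIsTheta⟩, fun _ => by omega⟩
  · have hlt := hconn.ncard_edgeSet_add_card_lt
      ⟨v, mem_verts_thetaSubgraph.2 (Or.inl p.start_mem_support)⟩ htop
    refine ⟨by omega, fun h => by omega, ?_⟩
    rintro ⟨a, b, c, habc, -, hIsTheta⟩
    have hG := hIsTheta.ncard_edgeSet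
    omega

/-- **Theorem 3, second bullet.** For even `n ≥ 4`, every `n`-vertex `3`-chromatic `2`-connected
graph `G` satisfies `i_2(G) ≤ C(n,2) - (n+1)`, with equality iff `G` is (isomorphic to) a theta
graph `θ_{a,b,c}` (with `a+b+c = n+1`) in which at least one of `a`, `b`, `c` is even. -/
theorem max_indep_pairs_even {V : Type*} [Fintype V] (n : ℕ) (hn : 4 ≤ n) (heven : Even n)
    (G : SimpleGraph V) (hcard : Fintype.card V = n)
    (hchrom : G.chromaticNumber = 3) (hconn : LConnected G 2) :
    numIndepSize G 2 ≤ Nat.choose n 2 - (n + 1) ∧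
      (numIndepSize G 2 = Nat.choose n 2 - (n + 1) ↔
        ∃ a b c : ℕ, a + b + c = n + 1 ∧ (Even a ∨ Even b ∨ Even c) ∧ IsTheta G a b c) :=
  max_indep_pairs_even_general n heven G hcard
    (fun hcol => absurd (hchrom ▸ hcol.chromaticNumber_le) (by decide)) hconn
end

section
/- For all integers n, k, ℓ with k − 1 > ℓ > 1 and ℓ ≤ n − k, there exists an n-vertex k-chromatic ℓ-connected simple graph with exactly C(k,2) + ⌈(n−k+1)·ℓ/2⌉ edges. -/
/-! Take Harary's `ℓ`-connected graph on `n - k + 1` vertices, which has `⌈(n - k + 1) * ℓ / 2⌉`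
edges, and replace a vertex of maximum degree by a `k`-clique, reattaching the edges at that vertex
to distinct clique vertices. This adds `k.choose 2` edges. All other vertices have degree at most
`ℓ < k`, so a coloring of the clique extends greedily. A separation of the new graph either projects
to a separation of Harary's graph of no larger order, or cuts all edges between the clique and the
rest, which form a matching of size at least `ℓ`.

In Harary's graph a separator contains, between the two sides, `⌊ℓ / 2⌋` cyclically consecutive
vertices in either direction. This gives `ℓ` vertices for even `ℓ`. For odd `ℓ` one more is needed,
and if there were none, the two sides would be the arcs between these two gaps, joined by a half
turn. -/

open SimpleGraph

section Separation

variable {V W : Type*} {G : SimpleGraph V} {A B : Set V}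

/-- A separation of a graph, given by its two open sides: `A` and `B` are nonempty, disjoint and
not joined by an edge. The separator is the remaining vertex set `(A ∪ B)ᶜ`, and the order of the
separation is its cardinality. -/
structure IsSeparation (G : SimpleGraph V) (A B : Set V) : Prop where
  left_nonempty : A.Nonempty
  right_nonempty : B.Nonempty
  disjoint : Disjoint A B
  not_adj : ∀ a ∈ A, ∀ b ∈ B, ¬ G.Adj a b

lemma IsSeparation.symm (h : IsSeparation G A B) : IsSeparation G B A where
  left_nonempty := h.right_nonempty
  right_nonempty := h.left_nonempty
  disjoint := h.disjoint.symm
  not_adj b hb a ha hba := h.not_adj a ha b hb hba.symm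

lemma IsSeparation.preimage {H : SimpleGraph W} {A B : Set W} (h : IsSeparation H A B)
    (e : G ≃g H) : IsSeparation G (e ⁻¹' A) (e ⁻¹' B) where
  left_nonempty := h.left_nonempty.preimage e.surjective
  right_nonempty := h.right_nonempty.preimage e.surjective
  disjoint := h.disjoint.preimage e
  not_adj a ha b hb hab := h.not_adj (e a) ha (e b) hb (e.map_adj_iff.2 hab)

lemma IsSeparation.not_preconnected_induce (h : IsSeparation G A B) :
    ¬ (G.induce (A ∪ B)).Preconnected := by
  intro hconn
  obtain ⟨a, ha⟩ := h.left_nonempty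
  obtain ⟨b, hb⟩ := h.right_nonempty
  obtain ⟨walk⟩ := hconn ⟨a, Or.inl ha⟩ ⟨b, Or.inr hb⟩
  obtain ⟨d, -, hd₁, hd₂⟩ := walk.exists_boundary_dart {x | x.1 ∈ A} ha
    fun hbA => h.disjoint.notMem_of_mem_left hbA hb
  exact h.not_adj _ hd₁ _ (d.snd.2.resolve_left hd₂) d.adj

lemma exists_isSeparation_of_not_preconnected_induce {s : Set V}
    (hs : ¬ (G.induce s).Preconnected) : ∃ A B, IsSeparation G A B ∧ A ∪ B = s := by
  simp only [Preconnected, not_forall] at hs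
  obtain ⟨u, v, huv⟩ := hs
  refine ⟨Subtype.val '' {x | (G.induce s).Reachable u x},
    Subtype.val '' {x | (G.induce s).Reachable u x}ᶜ,
    ⟨⟨u, u, .rfl, rfl⟩, ⟨v, v, huv, rfl⟩, ?_, ?_⟩, ?_⟩
  · exact Set.disjoint_image_of_injective Subtype.val_injective disjoint_compl_right
  · rintro _ ⟨a, ha, rfl⟩ _ ⟨b, hb, rfl⟩ hab
    exact hb (ha.trans (Adj.reachable hab))
  · rw [← Set.image_union, Set.union_compl_self, Set.image_univ, Subtype.range_coe]

end Separation

section LConnected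

variable {V W : Type*} [Fintype V] [Fintype W] {G : SimpleGraph V} {H : SimpleGraph W} {ℓ : ℕ}

theorem lConnected_iff_forall_isSeparation :
    LConnected G ℓ ↔
      ℓ < Fintype.card V ∧ ∀ A B, IsSeparation G A B → ℓ ≤ (A ∪ B)ᶜ.ncard := by
  classical
  refine and_congr_right fun hcard => ⟨fun h A B hAB => ?_, fun h s hs => ?_⟩
  · by_contra! hlt
    rw [Set.ncard_eq_toFinset_card'] at hlt
    apply hAB.not_preconnected_induce
    have hconn := (h _ hlt).preconnected
    rwa [Set.coe_toFinset, compl_compl] at hconn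
  · have hne : (s : Set V)ᶜ.Nonempty := by
      rw [Set.nonempty_compl, Ne, Finset.coe_eq_univ]
      rintro rfl
      exact (hs.trans hcard).ne Finset.card_univ
    have := hne.to_subtype
    refine .mk (by_contra fun hpre => ?_)
    obtain ⟨A, B, hAB, hunion⟩ := exists_isSeparation_of_not_preconnected_induce hpre
    have := h A B hAB
    rw [hunion, compl_compl, Set.ncard_coe_finset] at this
    omega

lemma LConnected.of_iso (h : LConnected G ℓ) (e : G ≃g H) : LConnected H ℓ := by
  rw [lConnected_iff_forall_isSeparation] at h ⊢
  refine ⟨by rw [← e.card_eq]; exact h.1, fun A B hAB => ?_⟩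
  have := h.2 _ _ (hAB.preimage e)
  rwa [← Set.preimage_union, ← Set.preimage_compl,
    Set.ncard_preimage_of_injective_subset_range e.injective (by simp)] at this

lemma LConnected.le_degree_s9 (h : LConnected G ℓ) (v : V) [Fintype (G.neighborSet v)] :
    ℓ ≤ G.degree v := by
  classical
  obtain ⟨hcard, hsep⟩ := lConnected_iff_forall_isSeparation.1 h
  rw [← card_neighborFinset_eq_degree]
  by_cases huniv : insert v (G.neighborFinset v) = Finset.univ
  · have := Finset.card_insert_le v (G.neighborFinset v)
    rw [huniv, Finset.card_univ] at this
    omega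
  · have hAB : IsSeparation G {v} (insert v (G.neighborSet v))ᶜ :=
      { left_nonempty := ⟨v, rfl⟩
        right_nonempty := by
          rw [Set.nonempty_compl]
          simpa [← Finset.coe_inj] using huniv
        disjoint := by simp
        not_adj := by
          rintro _ rfl b hb hvb
          exact hb (Or.inr hvb) }
    refine (hsep _ _ hAB).trans_eq ?_
    rw [← Set.ncard_coe_finset, coe_neighborFinset]
    congr 1
    ext x
    by_cases hx : x = v <;> simp [hx]

lemma LConnected.card_mul_le (h : LConnected G ℓ) :
    Fintype.card V * ℓ ≤ 2 * Nat.card G.edgeSet := by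
  classical
  rw [Nat.card_eq_fintype_card, ← edgeFinset_card, ← G.sum_degrees_eq_twice_card_edges]
  simpa using Finset.card_nsmul_le_sum Finset.univ (G.degree ·) ℓ fun v _ => h.le_degree_s9 v

/-- Only one unit of slack is left in the degree sum, and a vertex of maximum degree takes it. -/
lemma LConnected.exists_degree_le [DecidableRel G.Adj] (h : LConnected G ℓ)
    (hE : 2 * Nat.card G.edgeSet ≤ Fintype.card V * ℓ + 1) :
    ∃ v, G.degree v ≤ ℓ + 1 ∧ ∀ u ≠ v, G.degree u ≤ ℓ := by
  classical
  have : Nonempty V := Fintype.card_pos_iff.1 (by have := h.1; omega)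
  obtain ⟨v, hv⟩ := G.exists_maximal_degree_vertex
  have hslack : ∑ u, (G.degree u - ℓ) ≤ 1 := by
    have hsum : ∑ u, (G.degree u - ℓ + ℓ) = 2 * Nat.card G.edgeSet := by
      simp only [Nat.sub_add_cancel (h.le_degree_s9 _), G.sum_degrees_eq_twice_card_edges,
        edgeFinset_card, Nat.card_eq_fintype_card]
    rw [Finset.sum_add_distrib, Finset.sum_const, Finset.card_univ, smul_eq_mul] at hsum
    omega
  refine ⟨v, ?_, fun u huv => ?_⟩
  · have := Finset.single_le_sum (f := fun u => G.degree u - ℓ) (fun _ _ => Nat.zero_le _)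
      (Finset.mem_univ v)
    omega
  · have hpair := Finset.sum_le_sum_of_subset (f := fun u => G.degree u - ℓ)
      (Finset.subset_univ {u, v})
    rw [Finset.sum_pair huv] at hpair
    have := G.degree_le_maxDegree u
    omega

end LConnected

section Circulant

lemma ncard_edgeSet_circulantGraph_le {M : Type*} [AddGroup M] [Finite M] (s : Set M) :
    (circulantGraph s).edgeSet.ncard ≤ Nat.card M * s.ncard := by
  have hsub : (circulantGraph s).edgeSet ⊆
      (fun x : M × M => s(x.1, x.2 + x.1)) '' Set.univ ×ˢ s := by
    intro e
    induction e with | _ u v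
    rintro ⟨-, h | h⟩
    · exact ⟨(v, u - v), ⟨trivial, h⟩, by simp [Sym2.eq_swap]⟩
    · exact ⟨(u, v - u), ⟨trivial, h⟩, by simp⟩
  calc (circulantGraph s).edgeSet.ncard
      ≤ (Set.univ ×ˢ s).ncard :=
        (Set.ncard_le_ncard hsub (Set.toFinite _)).trans (Set.ncard_image_le (Set.toFinite _))
    _ = Nat.card M * s.ncard := by rw [Set.ncard_prod, Set.ncard_univ]

variable {N r : ℕ} {G : SimpleGraph (ZMod N)} {A B : Set (ZMod N)}

lemma injOn_intCast_Ioc (N : ℕ) (c : ℤ) :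
    Set.InjOn (Int.cast : ℤ → ZMod N) (Set.Ioc c (c + N)) := by
  rintro i ⟨hi, hi'⟩ j ⟨hj, hj'⟩ hij
  rw [ZMod.intCast_eq_intCast_iff_dvd_sub] at hij
  have := Int.eq_zero_of_abs_lt_dvd hij (by rw [abs_lt]; constructor <;> omega)
  omega

lemma exists_last_mem_before {s : Set ℤ} {a b : ℤ} (ha : a ∈ s) (hab : a < b) :
    ∃ p ∈ s, a ≤ p ∧ p < b ∧ ∀ i ∈ Set.Ioo p b, i ∉ s := by
  obtain ⟨p, ⟨hps, hpb⟩, hmax⟩ := Int.exists_greatest_of_bdd (P := fun i => i ∈ s ∧ i < b)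
    ⟨b, fun i hi => hi.2.le⟩ ⟨a, ha, hab⟩
  exact ⟨p, hps, hmax a ⟨ha, hab⟩, hpb, fun i hi his => (hmax i ⟨his, hi.2⟩).not_gt hi.1⟩

/-- The `r` integers after the last point of `A` before `b` can lie neither in `A` nor, being
adjacent to that point, in `B`. -/
lemma IsSeparation.exists_gap (h : IsSeparation G A B)
    (hG : circulantGraph (Nat.cast '' Set.Icc 1 r) ≤ G) {a b : ℤ}
    (ha : (a : ZMod N) ∈ A) (hb : (b : ZMod N) ∈ B) (hab : a < b) :
    ∃ p : ℤ, (p : ZMod N) ∈ A ∧ a ≤ p ∧ p + r < b ∧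
      ∀ i ∈ Set.Ioc p (p + r), (i : ZMod N) ∈ (A ∪ B)ᶜ := by
  obtain ⟨p, hpA, hap, hpb, hlast⟩ := exists_last_mem_before (s := Int.cast ⁻¹' A) ha hab
  have hnotB : ∀ i ∈ Set.Ioc p (p + r), (i : ZMod N) ∉ B := by
    rintro i ⟨hpi, hir⟩ hiB
    refine h.not_adj _ hpA _ hiB (hG ?_)
    refine ⟨h.disjoint.ne_of_mem hpA hiB, Or.inr ?_⟩
    refine ⟨(i - p).toNat, ⟨by omega, by omega⟩, ?_⟩
    rw [← Int.cast_natCast, Int.toNat_of_nonneg (by omega), Int.cast_sub]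
  have hpr : p + r < b := by
    by_contra! hle
    exact hnotB b ⟨hpb, hle⟩ hb
  refine ⟨p, hpA, hap, hpr, fun i hi => ?_⟩
  rintro (hiA | hiB)
  · exact hlast i ⟨hi.1, hi.2.trans_lt hpr⟩ hiA
  · exact hnotB i hi hiB

lemma IsSeparation.exists_two_gaps [NeZero N] (h : IsSeparation G A B)
    (hG : circulantGraph (Nat.cast '' Set.Icc 1 r) ≤ G) :
    ∃ p q : ℤ, (p : ZMod N) ∈ A ∧ (q : ZMod N) ∈ B ∧ p + r < q ∧ q + r < p + N ∧
      ∀ i ∈ Set.Ioc p (p + r) ∪ Set.Ioc q (q + r), (i : ZMod N) ∈ (A ∪ B)ᶜ := by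
  obtain ⟨a, ha⟩ := h.left_nonempty
  obtain ⟨b, hb⟩ := h.right_nonempty
  have hpos : 0 < (b - a).val := by
    rw [ZMod.val_pos, sub_ne_zero]
    exact (h.disjoint.ne_of_mem ha hb).symm
  have hlt : (b - a).val < N := ZMod.val_lt _
  obtain ⟨p, hpA, hap, hpb, hp⟩ := h.exists_gap hG (a := a.val) (b := a.val + (b - a).val)
    (by simpa using ha) (by simpa using hb) (by omega)
  obtain ⟨q, hqB, hbq, hqp, hq⟩ := h.symm.exists_gap hG (a := a.val + (b - a).val) (b := p + N)
    (by simpa using hb) (by simpa using hpA) (by omega)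
  rw [Set.union_comm B A] at hq
  exact ⟨p, q, hpA, hqB, by omega, hqp, fun i hi => hi.elim (hp i) (hq i)⟩

lemma ncard_image_two_gaps {p q : ℤ} (hpq : p + r < q) (hqp : q + r < p + N) :
    ((Int.cast : ℤ → ZMod N) '' (Set.Ioc p (p + r) ∪ Set.Ioc q (q + r))).ncard = 2 * r := by
  have hdisj : Disjoint (Set.Ioc p (p + r)) (Set.Ioc q (q + r)) :=
    Set.disjoint_left.2 fun i hi hi' => by have := hi.2; have := hi'.1; omega
  have hsub : Set.Ioc p (p + r) ∪ Set.Ioc q (q + r) ⊆ Set.Ioc p (p + N) := by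
    rintro i (⟨_, _⟩ | ⟨_, _⟩) <;> constructor <;> omega
  rw [((injOn_intCast_Ioc N p).mono hsub).ncard_image,
    Set.ncard_union_eq hdisj (Set.finite_Ioc _ _) (Set.finite_Ioc _ _)]
  simp only [← Finset.coe_Ioc, Set.ncard_coe_finset, Int.card_Ioc]
  omega

lemma IsSeparation.two_mul_le_ncard [NeZero N] (h : IsSeparation G A B)
    (hG : circulantGraph (Nat.cast '' Set.Icc 1 r) ≤ G) : 2 * r ≤ (A ∪ B)ᶜ.ncard := by
  obtain ⟨p, q, -, -, hpq, hqp, hgap⟩ := h.exists_two_gaps hG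
  rw [← ncard_image_two_gaps (N := N) hpq hqp]
  exact Set.ncard_le_ncard (Set.image_subset_iff.2 hgap)

lemma IsSeparation.Ioc_subset_right (h : IsSeparation G A B)
    (hG : circulantGraph (Nat.cast '' Set.Icc 1 r) ≤ G) (hr : 1 ≤ r) {c q : ℤ}
    (hq : (q : ZMod N) ∈ B) (harc : ∀ i ∈ Set.Ioc c q, (i : ZMod N) ∈ A ∪ B) :
    ∀ i ∈ Set.Ioc c q, (i : ZMod N) ∈ B := by
  intro i hi
  refine (harc i hi).resolve_left fun hiA => ?_
  have hiq : i < q := hi.2.lt_of_ne fun hiq =>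
    h.disjoint.notMem_of_mem_left hiA (by rwa [hiq])
  obtain ⟨p, -, hip, hpq, hgap⟩ := h.exists_gap hG hiA hq hiq
  exact hgap (p + 1) ⟨by omega, by omega⟩ (harc _ ⟨by have := hi.1; omega, by omega⟩)

/-- If the separator has only `2 * r` vertices, then it consists of the two gaps, and the sides `A`
and `B` are the two arcs between them. The arc with at least half of the remaining vertices contains
every half turn of the last vertex of the other one. -/
lemma IsSeparation.two_mul_lt_ncard [NeZero N] (h : IsSeparation G A B)
    (hG : circulantGraph (Nat.cast '' Set.Icc 1 r) ≤ G) (hr : 1 ≤ r)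
    (hturn : ∀ u : ZMod N, ∃ t : ℕ, (t = N / 2 ∨ t = N - N / 2) ∧ G.Adj u (u + t)) :
    2 * r < (A ∪ B)ᶜ.ncard := by
  obtain ⟨p, q, hpA, hqB, hpq, hqp, hgap⟩ := h.exists_two_gaps hG
  by_contra! hle
  have hS : Int.cast '' (Set.Ioc p (p + r) ∪ Set.Ioc q (q + r)) = (A ∪ B)ᶜ :=
    Set.eq_of_subset_of_ncard_le (Set.image_subset_iff.2 hgap)
      (hle.trans_eq (ncard_image_two_gaps hpq hqp).symm)
  have hmem : ∀ i ∈ Set.Ioc p (p + N), i ∉ Set.Ioc p (p + r) ∪ Set.Ioc q (q + r) →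
      (i : ZMod N) ∈ A ∪ B := by
    refine fun i hi hi' => by_contra fun hiS => ?_
    obtain ⟨j, hj, hji⟩ := hS.ge hiS
    have hjN : j ∈ Set.Ioc p (p + N) := by
      rcases hj with ⟨_, _⟩ | ⟨_, _⟩ <;> constructor <;> omega
    exact hi' (injOn_intCast_Ioc N p hjN hi hji ▸ hj)
  have hB : ∀ i ∈ Set.Ioc (p + r) q, (i : ZMod N) ∈ B :=
    h.Ioc_subset_right hG hr hqB fun i hi => hmem i
      ⟨by have := hi.1; omega, by have := hi.2; omega⟩
      (by simp only [Set.mem_union, Set.mem_Ioc] at hi ⊢; omega)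
  have hA : ∀ i ∈ Set.Ioc (q + r) (p + N), (i : ZMod N) ∈ A :=
    h.symm.Ioc_subset_right hG hr (by simpa using hpA) fun i hi => (hmem i
      ⟨by have := hi.1; omega, hi.2⟩
      (by simp only [Set.mem_union, Set.mem_Ioc] at hi ⊢; omega)).symm
  rcases le_total (N : ℤ) (2 * (q - p)) with hlong | hshort
  · obtain ⟨t, ht, hadj⟩ := hturn p
    exact h.not_adj _ hpA _ (by simpa using hB (p + t) ⟨by omega, by omega⟩) hadj
  · obtain ⟨t, ht, hadj⟩ := hturn q
    exact h.symm.not_adj _ hqB _ (by simpa using hA (q + t) ⟨by omega, by omega⟩) hadj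

end Circulant

section Harary

variable {N ℓ : ℕ}

/-- The edges `i, i + ⌊N / 2⌋` for `0 ≤ i < ⌈N / 2⌉`. For even `N` this is the perfect matching by
diameters; for odd `N` the vertex `⌊N / 2⌋` lies on two edges and every other vertex on one. -/
def halfTurnGraph (N : ℕ) : SimpleGraph (ZMod N) :=
  fromEdgeSet ((fun i : ℕ => s((i : ZMod N), ((i + N / 2 : ℕ) : ZMod N))) ''
    Set.Iio ((N + 1) / 2))

/-- Harary's graph: an `ℓ`-connected graph on `N` vertices with as few edges as possible. Each
vertex is joined to the `⌊ℓ / 2⌋` nearest ones in either direction, and for odd `ℓ` half turns are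
added. -/
def hararyGraph (N ℓ : ℕ) : SimpleGraph (ZMod N) :=
  circulantGraph (Nat.cast '' Set.Icc 1 (ℓ / 2)) ⊔ if Odd ℓ then halfTurnGraph N else ⊥

lemma ncard_edgeSet_halfTurnGraph_le (N : ℕ) :
    (halfTurnGraph N).edgeSet.ncard ≤ (N + 1) / 2 := by
  rw [halfTurnGraph, edgeSet_fromEdgeSet]
  refine (Set.ncard_le_ncard Set.sdiff_subset ((Set.finite_Iio _).image _)).trans
    ((Set.ncard_image_le (Set.finite_Iio _)).trans_eq ?_)
  rw [← Finset.coe_Iio, Set.ncard_coe_finset, Nat.card_Iio]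

lemma halfTurnGraph_adj {i : ℕ} (hi : i < (N + 1) / 2) (hN : 2 ≤ N) :
    (halfTurnGraph N).Adj i ((i + N / 2 : ℕ) : ZMod N) := by
  refine (fromEdgeSet_adj _).2 ⟨⟨i, hi, rfl⟩, fun heq => ?_⟩
  rw [Nat.cast_add, left_eq_add, ZMod.natCast_eq_zero_iff] at heq
  have := Nat.le_of_dvd (by omega) heq
  omega

lemma exists_halfTurnGraph_adj (hN : 2 ≤ N) (u : ZMod N) :
    ∃ t : ℕ, (t = N / 2 ∨ t = N - N / 2) ∧ (halfTurnGraph N).Adj u (u + t) := by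
  have : NeZero N := ⟨by omega⟩
  have hu : u.val < N := ZMod.val_lt u
  rcases lt_or_ge u.val ((N + 1) / 2) with hlt | hge
  · refine ⟨N / 2, Or.inl rfl, ?_⟩
    simpa using halfTurnGraph_adj hlt hN
  · refine ⟨N - N / 2, Or.inr rfl, ?_⟩
    have hadj := halfTurnGraph_adj (i := u.val - N / 2) (by omega) hN
    rw [Nat.sub_add_cancel (by omega), ZMod.natCast_zmod_val] at hadj
    convert hadj.symm
    rw [Nat.cast_sub (by omega), Nat.cast_sub (by omega)]
    simp [sub_eq_add_neg]

theorem lConnected_hararyGraph [NeZero N] (hℓ : 1 < ℓ) (hN : ℓ < N) :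
    LConnected (hararyGraph N ℓ) ℓ := by
  have hcirc : circulantGraph (Nat.cast '' Set.Icc 1 (ℓ / 2)) ≤ hararyGraph N ℓ := le_sup_left
  refine lConnected_iff_forall_isSeparation.2 ⟨by rwa [ZMod.card], fun A B hAB => ?_⟩
  rcases Nat.even_or_odd ℓ with heven | hodd
  · have := hAB.two_mul_le_ncard hcirc
    rwa [Nat.two_mul_div_two_of_even heven] at this
  · have hhalf : halfTurnGraph N ≤ hararyGraph N ℓ := by
      rw [hararyGraph, if_pos hodd]
      exact le_sup_right
    have := hAB.two_mul_lt_ncard hcirc (by omega) fun u => by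
      obtain ⟨t, ht, hadj⟩ := exists_halfTurnGraph_adj (by omega) u
      exact ⟨t, ht, hhalf hadj⟩
    rwa [← Nat.succ_le_iff, Nat.succ_eq_add_one, Nat.two_mul_div_two_add_one_of_odd hodd] at this

lemma card_edgeSet_hararyGraph_le (N ℓ : ℕ) [NeZero N] :
    Nat.card (hararyGraph N ℓ).edgeSet ≤ (N * ℓ + 1) / 2 := by
  have hcirc : (circulantGraph (Nat.cast '' Set.Icc 1 (ℓ / 2) : Set (ZMod N))).edgeSet.ncard ≤
      N * (ℓ / 2) := by
    refine (ncard_edgeSet_circulantGraph_le _).trans ?_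
    rw [Nat.card_zmod]
    refine Nat.mul_le_mul_left N ((Set.ncard_image_le (Set.finite_Icc _ _)).trans_eq ?_)
    rw [← Finset.coe_Icc, Set.ncard_coe_finset, Nat.card_Icc, Nat.add_sub_cancel]
  have hunion := Set.ncard_union_le
    (circulantGraph (Nat.cast '' Set.Icc 1 (ℓ / 2) : Set (ZMod N))).edgeSet
    (if Odd ℓ then halfTurnGraph N else ⊥).edgeSet
  rw [← edgeSet_sup, ← hararyGraph] at hunion
  rw [Nat.card_coe_set_eq]
  obtain ⟨r, rfl | rfl⟩ := Nat.even_or_odd' ℓ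
  · simp only [Nat.not_odd_iff_even.2 (even_two_mul r), if_false, edgeSet_bot,
      Set.ncard_empty, Nat.mul_div_cancel_left r two_pos] at hunion hcirc
    rw [mul_left_comm]
    omega
  · simp only [odd_two_mul_add_one r, if_true,
      show (2 * r + 1) / 2 = r by omega] at hunion hcirc
    have := ncard_edgeSet_halfTurnGraph_le N
    rw [mul_add, mul_left_comm]
    omega

lemma card_edgeSet_hararyGraph [NeZero N] (hℓ : 1 < ℓ) (hN : ℓ < N) :
    Nat.card (hararyGraph N ℓ).edgeSet = (N * ℓ + 1) / 2 := by
  have hle := card_edgeSet_hararyGraph_le N ℓ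
  have hge := (lConnected_hararyGraph hℓ hN).card_mul_le
  rw [ZMod.card] at hge
  omega

end Harary

section Coloring

variable {V α : Type*} [Fintype V] [Fintype α] {G : SimpleGraph V} [DecidableRel G.Adj]

/-- Greedy coloring of the vertices outside `T`. -/
lemma nonempty_coloring_of_degree_lt (T : Set V) (c₀ : V → α)
    (hc₀ : ∀ u ∈ T, ∀ v ∈ T, G.Adj u v → c₀ u ≠ c₀ v)
    (hdeg : ∀ v ∉ T, G.degree v < Fintype.card α) : Nonempty (G.Coloring α) := by
  classical
  have hgreedy (s : Finset V) :
      ∃ c : V → α, ∀ u ∈ T ∪ s, ∀ v ∈ T ∪ s, G.Adj u v → c u ≠ c v := by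
    induction s using Finset.induction with
    | empty => exact ⟨c₀, by simpa using hc₀⟩
    | insert x s _ ih =>
      obtain ⟨c, hc⟩ := ih
      by_cases hxT : x ∈ T
      · exact ⟨c, by rwa [Finset.coe_insert, Set.union_insert, 
          Set.insert_eq_of_mem (Set.mem_union_left _ hxT)]⟩
      obtain ⟨a, -, ha⟩ : ∃ a ∈ Finset.univ, a ∉ (G.neighborFinset x).image c :=
        Finset.exists_mem_notMem_of_card_lt_card (Finset.card_image_le.trans_lt (hdeg x hxT))
      have hfree (y : V) (hy : G.Adj x y) : c y ≠ a := fun hya =>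
        ha (Finset.mem_image.2 ⟨y, (G.mem_neighborFinset x y).2 hy, hya⟩)
      refine ⟨Function.update c x a, fun u hu v hv huv => ?_⟩
      rw [Finset.coe_insert, Set.union_insert, Set.mem_insert_iff] at hu hv
      rcases eq_or_ne u x with rfl | hux
      · rw [Function.update_self, Function.update_of_ne huv.ne']
        exact (hfree v huv).symm
      rcases eq_or_ne v x with rfl | hvx
      · rw [Function.update_self, Function.update_of_ne hux]
        exact hfree u huv.symm
      · rw [Function.update_of_ne hux, Function.update_of_ne hvx]
        exact hc u (hu.resolve_left hux) v (hv.resolve_left hvx) huv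
  obtain ⟨c, hc⟩ := hgreedy Finset.univ
  exact ⟨Coloring.mk c fun {u v} huv => hc u (by simp) v (by simp) huv⟩

end Coloring

section ExpandVertex

variable {V K : Type*} (H : SimpleGraph V) (v : V) (f : V → K)

/-- The graph obtained from `H` by replacing the vertex `v` with a clique on `K`: every other vertex
keeps its edges, and the edge to a neighbor `x` of `v` is reattached to the clique vertex `f x`. -/
def expandVertex : SimpleGraph (K ⊕ {x // x ≠ v}) where
  Adj
    | .inl a, .inl b => a ≠ b
    | .inl a, .inr x => H.Adj v x ∧ f x = a
    | .inr x, .inl a => H.Adj v x ∧ f x = a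
    | .inr x, .inr y => H.Adj x y
  symm := ⟨by
    rintro (a | x) (b | y) h
    exacts [h.symm, h, h, h.symm]⟩
  loopless := ⟨by
    rintro (a | x) h
    exacts [h rfl, h.ne rfl]⟩

/-- The map collapsing the clique of `expandVertex H v f` back to `v`. -/
def collapseVertex : K ⊕ {x // x ≠ v} → V :=
  Sum.elim (fun _ => v) Subtype.val

instance [DecidableEq K] [DecidableRel H.Adj] : DecidableRel (expandVertex H v f).Adj
  | .inl a, .inl b => inferInstanceAs (Decidable (a ≠ b))
  | .inl a, .inr x => inferInstanceAs (Decidable (H.Adj v x ∧ f x = a))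
  | .inr x, .inl a => inferInstanceAs (Decidable (H.Adj v x ∧ f x = a))
  | .inr x, .inr y => inferInstanceAs (Decidable (H.Adj x y))

variable {H v f}

section Separation

variable {A B : Set (K ⊕ {x // x ≠ v})}

lemma IsSeparation.forall_inl_notMem (h : IsSeparation (expandVertex H v f) A B) :
    (∀ a, .inl a ∉ A) ∨ ∀ b, .inl b ∉ B := by
  by_contra! hmeet
  obtain ⟨⟨a, ha⟩, ⟨b, hb⟩⟩ := hmeet
  refine h.not_adj _ ha _ hb fun hab : a = b => ?_
  exact h.disjoint.notMem_of_mem_left ha (hab ▸ hb)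

/-- The clique vertices in `A` are dropped unless they form the whole clique, so that `v` lies in
the new separator as soon as the old one meets the clique. -/
lemma IsSeparation.collapseVertex (h : IsSeparation (expandVertex H v f) A B)
    (hB : ∀ b, .inl b ∉ B) {x : {x // x ≠ v}} (hx : .inr x ∈ A) :
    IsSeparation H {y | ∀ z, collapseVertex v z = y → z ∈ A} (collapseVertex v '' B) where
  left_nonempty := by
    refine ⟨x, ?_⟩
    rintro (a | y) hy
    · exact absurd hy.symm x.2
    · rwa [Subtype.ext hy]
  right_nonempty := h.right_nonempty.image _
  disjoint := by
    rw [Set.disjoint_left]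
    rintro _ hA ⟨z, hzB, rfl⟩
    exact h.disjoint.notMem_of_mem_left (hA z rfl) hzB
  not_adj := by
    rintro y hA _ ⟨b | z, hzB, rfl⟩ hyz
    · exact hB b hzB
    by_cases hy : y = v
    · subst hy
      exact h.not_adj _ (hA (.inl (f z)) rfl) _ hzB ⟨hyz, rfl⟩
    · exact h.not_adj _ (hA (.inr ⟨y, hy⟩) rfl) _ hzB hyz

/-- The edges at `v` become pairwise disjoint edges of the expanded graph, and each of them has an
endpoint in the separator. -/
lemma IsSeparation.ncard_neighborSet_le [Finite V] [Finite K]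
    (h : IsSeparation (expandVertex H v f) A B)
    (hf : Set.InjOn f (H.neighborSet v)) (hB : ∀ b, .inl b ∉ B) (hA : ∀ x, .inr x ∉ A) :
    (H.neighborSet v).ncard ≤ (A ∪ B)ᶜ.ncard := by
  classical
  refine Set.ncard_le_ncard_of_injOn
    (fun x => if hx : ∃ hxv : x ≠ v, .inr ⟨x, hxv⟩ ∈ (A ∪ B)ᶜ then .inr ⟨x, hx.fst⟩
      else .inl (f x)) (fun x hx => ?_) (fun x hx y hy hxy => ?_)
  · split_ifs with hS
    · exact hS.snd
    · have hxB : .inr ⟨x, hx.ne'⟩ ∈ B :=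
        (not_not.1 fun hxS => hS ⟨hx.ne', hxS⟩).resolve_left (hA _)
      have hfx : .inl (f x) ∉ A := fun hfA => h.not_adj _ hfA _ hxB ⟨hx, rfl⟩
      exact fun hmem => hmem.elim hfx (hB _)
  · dsimp only at hxy
    split_ifs at hxy
    · exact congrArg Subtype.val (Sum.inr_injective hxy)
    · exact hf hx hy (Sum.inl_injective hxy)

theorem LConnected.expandVertex [Fintype V] [Fintype K] [Nonempty K] [DecidableEq V] {ℓ : ℕ}
    (h : LConnected H ℓ) (hf : Set.InjOn f (H.neighborSet v)) :
    LConnected (expandVertex H v f) ℓ := by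
  classical
  obtain ⟨hcard, hsep⟩ := lConnected_iff_forall_isSeparation.1 h
  refine lConnected_iff_forall_isSeparation.2 ⟨?_, fun A B hAB => ?_⟩
  · rw [Fintype.card_sum, Fintype.card_subtype_compl, Fintype.card_subtype_eq]
    have := Fintype.card_pos (α := K)
    omega
  wlog hB : ∀ b, .inl b ∉ B generalizing A B
  · rw [Set.union_comm]
    exact this B A hAB.symm (hAB.forall_inl_notMem.resolve_right hB)
  by_cases hA : ∃ x, .inr x ∈ A
  · obtain ⟨x, hx⟩ := hA
    refine (hsep _ _ (hAB.collapseVertex hB hx)).trans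
      ((Set.ncard_le_ncard fun y hy => ?_).trans (Set.ncard_image_le (f := collapseVertex v)))
    obtain ⟨hyA, hyB⟩ := not_or.1 hy
    obtain ⟨z, rfl, hzA⟩ : ∃ z, collapseVertex v z = y ∧ z ∉ A := by
      by_contra! hall
      exact hyA hall
    exact ⟨z, not_or.2 ⟨hzA, fun hzB => hyB ⟨z, hzB, rfl⟩⟩, rfl⟩
  · refine le_trans ?_ (hAB.ncard_neighborSet_le hf hB (not_exists.1 hA))
    rw [Set.ncard_eq_toFinset_card']
    exact h.le_degree_s9 v

end Separation

section Degree

variable [Fintype V] [Fintype K] [DecidableEq V] [DecidableEq K] [DecidableRel H.Adj]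

lemma degree_expandVertex_inr (x : {x // x ≠ v}) :
    (expandVertex H v f).degree (.inr x) = H.degree x := by
  rw [← card_neighborFinset_eq_degree, ← card_neighborFinset_eq_degree]
  refine Finset.card_nbij (collapseVertex v) ?_ ?_ ?_
  · rintro (a | y) hy <;> rw [Finset.mem_coe, mem_neighborFinset] at hy ⊢
    · exact hy.1.symm
    · exact hy
  · rintro (a | y) hy (b | z) hz hyz <;>
      rw [Finset.mem_coe, mem_neighborFinset] at hy hz
    · exact congrArg _ (hy.2.symm.trans hz.2)
    · exact absurd hyz.symm z.2
    · exact absurd hyz y.2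
    · exact congrArg _ (Subtype.ext hyz)
  · intro y hy
    rw [Finset.mem_coe, mem_neighborFinset] at hy
    by_cases hyv : y = v
    · subst hyv
      exact ⟨.inl (f x), Finset.mem_coe.2 ((mem_neighborFinset ..).2 ⟨hy.symm, rfl⟩), rfl⟩
    · exact ⟨.inr ⟨y, hyv⟩, Finset.mem_coe.2 ((mem_neighborFinset ..).2 hy), rfl⟩

lemma degree_expandVertex_inl (a : K) :
    (expandVertex H v f).degree (.inl a) =
      (Fintype.card K - 1) + {x ∈ H.neighborFinset v | f x = a}.card := by
  have hnbr : (expandVertex H v f).neighborFinset (.inl a) =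
      (Finset.univ.erase a).disjSum
        ({x ∈ H.neighborFinset v | f x = a}.subtype (· ≠ v)) := by
    ext (b | x)
    · simp only [mem_neighborFinset, Finset.inl_mem_disjSum, Finset.mem_erase, Finset.mem_univ,
        and_true]
      exact ne_comm
    · simp only [mem_neighborFinset, Finset.inr_mem_disjSum, Finset.mem_subtype,
        Finset.mem_filter]
      rfl
  rw [← card_neighborFinset_eq_degree, hnbr, Finset.card_disjSum,
    Finset.card_erase_of_mem (Finset.mem_univ a), Finset.card_univ, Finset.card_subtype,
    Finset.filter_true_of_mem]
  intro x hx
  exact ((H.mem_neighborFinset v x).1 (Finset.mem_filter.1 hx).1).ne'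

lemma sum_degree_expandVertex_inl :
    ∑ a, (expandVertex H v f).degree (.inl a) =
      Fintype.card K * (Fintype.card K - 1) + H.degree v := by
  simp only [degree_expandVertex_inl, Finset.sum_add_distrib, Finset.sum_const, Finset.card_univ,
    smul_eq_mul]
  rw [← Finset.card_eq_sum_card_fiberwise fun x _ => Finset.mem_coe.2 (Finset.mem_univ (f x)),
    card_neighborFinset_eq_degree]

end Degree

variable [Fintype K]

lemma exists_injOn_neighborSet [Fintype (H.neighborSet v)] [Nonempty K]
    (hdeg : H.degree v ≤ Fintype.card K) : ∃ f : V → K, Set.InjOn f (H.neighborSet v) := by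
  obtain ⟨f, -, hf⟩ := (H.neighborSet v).toFinite.exists_injOn_of_encard_le
    (t := (Set.univ : Set K)) (by
      rw [Set.encard_univ, ENat.card_eq_coe_fintype_card, Set.encard_eq_coe_toFinset_card]
      exact_mod_cast hdeg)
  exact ⟨f, hf⟩

theorem card_edgeSet_expandVertex [Finite V] :
    Nat.card (expandVertex H v f).edgeSet = (Fintype.card K).choose 2 + Nat.card H.edgeSet := by
  classical
  have := Fintype.ofFinite V
  have hdouble : 2 * Nat.card (expandVertex H v f).edgeSet =
      2 * (Fintype.card K).choose 2 + 2 * Nat.card H.edgeSet := by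
    calc 2 * Nat.card (expandVertex H v f).edgeSet
        = ∑ z, (expandVertex H v f).degree z := by
          rw [sum_degrees_eq_twice_card_edges, edgeFinset_card, Nat.card_eq_fintype_card]
      _ = Fintype.card K * (Fintype.card K - 1) +
            (H.degree v + ∑ x : {x // x ≠ v}, H.degree x) := by
          simp only [Fintype.sum_sum_type, sum_degree_expandVertex_inl, degree_expandVertex_inr,
            add_assoc]
      _ = 2 * (Fintype.card K).choose 2 + 2 * Nat.card H.edgeSet := by
          rw [← Fintype.sum_eq_add_sum_subtype_ne (H.degree ·) v, sum_degrees_eq_twice_card_edges,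
            edgeFinset_card, Nat.card_eq_fintype_card, Nat.choose_two_right,
            Nat.mul_div_cancel' (Nat.even_mul_pred_self _).two_dvd]
  omega

theorem chromaticNumber_expandVertex [Fintype V] [DecidableRel H.Adj]
    (hdeg : ∀ x ≠ v, H.degree x < Fintype.card K) :
    (expandVertex H v f).chromaticNumber = Fintype.card K := by
  classical
  apply le_antisymm
  · obtain ⟨c⟩ := nonempty_coloring_of_degree_lt (G := expandVertex H v f) (Set.range .inl)
      (Sum.elim id (f ·)) (by rintro _ ⟨a, rfl⟩ _ ⟨b, rfl⟩ hab; exact hab) (by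
        rintro (a | x) hx
        · exact absurd ⟨a, rfl⟩ hx
        · rw [degree_expandVertex_inr]
          exact hdeg x x.2)
    exact c.colorable.chromaticNumber_le
  · let clique : (⊤ : SimpleGraph K) →g expandVertex H v f := ⟨.inl, fun hab => hab⟩
    exact chromaticNumber_top.ge.trans (chromaticNumber_mono_of_hom clique)

end ExpandVertex

theorem min_edges_le_case_sharp_general (n k ℓ : ℕ)
    (hℓk : ℓ < k) (hℓ : 1 < ℓ) (hn : k + ℓ ≤ n) :
    ∃ G : SimpleGraph (Fin n),
      G.chromaticNumber = k ∧ LConnected G ℓ ∧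
        Nat.card G.edgeSet = Nat.choose k 2 + ((n - k + 1) * ℓ + 1) / 2 := by
  classical
  set N := n - k + 1
  let H := hararyGraph N ℓ
  have hconn : LConnected H ℓ := lConnected_hararyGraph hℓ (by omega)
  have hedges : Nat.card H.edgeSet = (N * ℓ + 1) / 2 := card_edgeSet_hararyGraph hℓ (by omega)
  obtain ⟨v, hv, hother⟩ := hconn.exists_degree_le (by rw [hedges, ZMod.card]; omega)
  have : NeZero k := ⟨by omega⟩
  obtain ⟨f, hf⟩ := exists_injOn_neighborSet (K := Fin k) (H := H) (v := v)
    (by rw [Fintype.card_fin]; omega)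
  have hcard : Fintype.card (Fin k ⊕ {x // x ≠ v}) = n := by
    rw [Fintype.card_sum, Fintype.card_subtype_compl, Fintype.card_subtype_eq, Fintype.card_fin,
      ZMod.card]
    omega
  let e := (expandVertex H v f).overFinIso hcard
  refine ⟨(expandVertex H v f).overFin hcard, ?_, (hconn.expandVertex hf).of_iso e, ?_⟩
  · rw [← chromaticNumber_congr e,
      chromaticNumber_expandVertex fun x hx => (hother x hx).trans_lt (by simpa using hℓk),
      Fintype.card_fin]
  · rw [← Nat.card_congr e.mapEdgeSet, card_edgeSet_expandVertex, hedges, Fintype.card_fin]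

/-- **Theorem 5 (sharpness).** For `k - 1 > ℓ > 1` and `ℓ ≤ n - k` there is an `n`-vertex
`k`-chromatic `ℓ`-connected graph with exactly `C(k,2) + ⌈(n-k+1)ℓ/2⌉` edges. -/
theorem min_edges_le_case_sharp (n k ℓ : ℕ)
    (hℓk : ℓ + 1 < k) (hℓ : 1 < ℓ) (hn : k + ℓ ≤ n) :
    ∃ G : SimpleGraph (Fin n),
      G.chromaticNumber = k ∧ LConnected G ℓ ∧
        Nat.card G.edgeSet = Nat.choose k 2 + ((n - k + 1) * ℓ + 1) / 2 := by
  exact min_edges_le_case_sharp_general n k ℓ (by omega) hℓ hn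
end

section
/- If G is an n-vertex k-chromatic ℓ-connected simple graph with k − 1 > ℓ > 1 and ℓ > n − k, then the number of edges of G satisfies |E(G)| ≥ C(k,2) + C(n−k,2) + (n−k)·(ℓ − (n−k−1)). -/
open SimpleGraph

/-!
Let `F = Gᶜ`, `p = n - k` and `d = n - 1 - ℓ`. Vertices of an `ℓ`-connected graph have degree at
least `ℓ`, so `F` has maximum degree at most `d`, and the theorem says that `F` has at most
`p * d` edges. This holds by induction on `p` whenever `χ(Fᶜ) ≥ n - p` and `p < d`. If the edges
of `F` at some vertex can be deleted so that the chromatic number of the complement is at least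
`n - p + 1`, this costs at most `d` edges. Otherwise every `v` has degree at most `p` in `F`:
deleting its edges leaves a complement with an `(n - p)`-colouring in which `v` is alone in its
class, and in `Fᶜ` every other colour must occur on a neighbour of `v`. Moreover `F` has no
matching of more than `p` edges, since the edges of a matching can serve as colour classes of
`Fᶜ`.

A graph of maximum degree `D` and matching number `ν` has at most `ν * (D + 1)` edges. A vertex
covered by every maximum matching can be deleted, which lowers `ν`. Without such vertices,
Gallai's lemma says that a maximum matching misses at most one vertex of each component, so a
component with `q` covered vertices has at most `q + 1` vertices, all of degree at most `min q D`.
In the situation above this gives at most `p * (p + 1) ≤ p * d` edges.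
-/

open Finset Function

section Involutions

variable {V : Type*} {σ τ : Equiv.Perm V}

/- With `ρ = σ * τ`, both involutions reverse the `ρ`-cycle of a fixed point `y` of `τ`. A fixed
point `ρ ^ i y` of `σ` makes `2 * i - 1` a multiple of the period of `y`. In particular the period
is odd, which determines `i` modulo it. -/

lemma right_apply_zpow_mul_of_involutive (hσ : Involutive σ) (hτ : Involutive τ) {y : V}
    (hy : τ y = y) (i : ℤ) : τ (((σ * τ) ^ i) y) = ((σ * τ) ^ (-i)) y := by
  have hσ' : σ⁻¹ = σ := Equiv.ext fun v => Equiv.Perm.inv_eq_iff_eq.mpr (hσ v).symm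
  have hτ' : τ⁻¹ = τ := Equiv.ext fun v => Equiv.Perm.inv_eq_iff_eq.mpr (hτ v).symm
  have hconj : τ * (σ * τ) * τ⁻¹ = (σ * τ)⁻¹ := by
    rw [← mul_assoc, mul_inv_cancel_right, mul_inv_rev, hσ', hτ']
  have hpow : τ * (σ * τ) ^ i * τ⁻¹ = (σ * τ) ^ (-i) := by
    rw [← conj_zpow, hconj, inv_zpow, zpow_neg]
  simpa [hτ', hy] using Equiv.ext_iff.mp hpow y

lemma left_apply_zpow_mul_of_involutive (hσ : Involutive σ) (hτ : Involutive τ) {y : V}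
    (hy : τ y = y) (i : ℤ) : σ (((σ * τ) ^ i) y) = ((σ * τ) ^ (1 - i)) y := by
  rw [sub_eq_add_neg, zpow_one_add, Equiv.Perm.mul_apply,
    ← right_apply_zpow_mul_of_involutive hσ hτ hy, Equiv.Perm.mul_apply, hτ]

lemma eq_of_sameCycle_mul_of_involutive (hσ : Involutive σ) (hτ : Involutive τ) {x y z : V}
    (hy : τ y = y) (hyx : (σ * τ).SameCycle y x) (hyz : (σ * τ).SameCycle y z)
    (hx : σ x = x) (hz : σ z = z) : x = z := by
  obtain ⟨i, rfl⟩ := hyx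
  obtain ⟨j, rfl⟩ := hyz
  have period_dvd {a b : ℤ} (h : ((σ * τ) ^ a) y = ((σ * τ) ^ b) y) :
      (MulAction.period (σ * τ) y : ℤ) ∣ b - a := by
    rw [← MulAction.zpow_smul_eq_iff_period_dvd, sub_eq_neg_add, zpow_add, mul_smul,
      Equiv.Perm.smul_def ((σ * τ) ^ b), ← h, ← Equiv.Perm.smul_def, ← mul_smul, ← zpow_add]
    simp
  rw [left_apply_zpow_mul_of_involutive hσ hτ hy] at hx hz
  obtain ⟨a, ha⟩ := period_dvd hx
  obtain ⟨b, hb⟩ := period_dvd hz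
  have hdvd : (MulAction.period (σ * τ) y : ℤ) ∣ j - i :=
    ⟨(b - a) * i - a * (j - i), by linear_combination i * (hb - ha) - (j - i) * ha⟩
  rw [← MulAction.zpow_smul_eq_iff_period_dvd, Equiv.Perm.smul_def] at hdvd
  rw [← add_sub_cancel i j, zpow_add, Equiv.Perm.mul_apply, hdvd]

end Involutions

section Matchings

variable {V : Type*} {F F' : SimpleGraph V} {σ τ : Equiv.Perm V}

/-- A matching of `F`, encoded as the involution that exchanges the ends of each matching edge and
fixes the uncovered vertices; its support is the set of covered vertices. -/
structure IsMatchingInvolution (F : SimpleGraph V) (σ : Equiv.Perm V) : Prop where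
  involutive : Involutive σ
  adj_of_ne : ∀ v, σ v ≠ v → F.Adj v (σ v)

/-- A matching of `F` that covers as many vertices as possible. -/
structure IsMaximumMatching [Fintype V] [DecidableEq V] (F : SimpleGraph V)
    (σ : Equiv.Perm V) : Prop extends IsMatchingInvolution F σ where
  card_support_le : ∀ τ, IsMatchingInvolution F τ → #τ.support ≤ #σ.support

namespace IsMatchingInvolution

lemma one (F : SimpleGraph V) : IsMatchingInvolution F 1 :=
  ⟨fun _ => rfl, fun _ h => absurd rfl h⟩

lemma mono (hF : F ≤ F') (hσ : IsMatchingInvolution F σ) : IsMatchingInvolution F' σ :=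
  ⟨hσ.involutive, fun v hv => hF (hσ.adj_of_ne v hv)⟩

lemma mul (hσ : IsMatchingInvolution F σ) (hτ : IsMatchingInvolution F τ)
    (h : σ.Disjoint τ) : IsMatchingInvolution F (σ * τ) := by
  have hcomm (v : V) : σ (τ v) = τ (σ v) := Equiv.ext_iff.mp h.commute.eq v
  refine ⟨fun v => ?_, fun v hv => ?_⟩
  · simp [← hcomm (τ v), hτ.involutive v, hσ.involutive v]
  · rw [Equiv.Perm.mul_apply] at hv ⊢
    rcases h v with hv' | hv'
    · rw [hcomm, hv'] at hv ⊢
      exact hτ.adj_of_ne v hv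
    · rw [hv'] at hv ⊢
      exact hσ.adj_of_ne v hv

lemma exists_eqOn_eqOn_compl (hσ : IsMatchingInvolution F σ) (hτ : IsMatchingInvolution F τ)
    {O : Set V} (hσO : Set.MapsTo σ O O) (hτO : Set.MapsTo τ O O) :
    ∃ ρ, IsMatchingInvolution F ρ ∧ Set.EqOn ρ τ O ∧ Set.EqOn ρ σ Oᶜ := by
  classical
  have hσO' : Set.MapsTo σ Oᶜ Oᶜ := fun v hv h => hv (hσ.involutive v ▸ hσO h)
  have hinv : Involutive (O.piecewise τ σ) := by
    intro v
    by_cases hv : v ∈ O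
    · simp [hv, hτO hv, hτ.involutive v]
    · simp [hv, Set.notMem_of_mem_compl (hσO' hv), hσ.involutive v]
  refine ⟨hinv.toPerm, ⟨hinv, fun v => ?_⟩, O.piecewise_eqOn τ σ, O.piecewise_eqOn_compl τ σ⟩
  by_cases hv : v ∈ O
  · simpa [hv] using hτ.adj_of_ne v
  · simpa [hv] using hσ.adj_of_ne v

lemma apply_eq_self_of_deleteIncidenceSet {v : V}
    (hσ : IsMatchingInvolution (F.deleteIncidenceSet v) σ) : σ v = v := by
  by_contra hv
  exact (deleteIncidenceSet_adj.mp (hσ.adj_of_ne v hv)).2.1 rfl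

variable [DecidableEq V]

lemma swap {a b : V} (h : F.Adj a b) : IsMatchingInvolution F (Equiv.swap a b) := by
  refine ⟨Equiv.swap_apply_self a b, fun v hv => ?_⟩
  obtain ⟨-, rfl | rfl⟩ := Equiv.swap_apply_ne_self_iff.mp hv
  · simpa using h
  · simpa using h.symm

variable [Fintype V]

lemma even_card_support (hσ : IsMatchingInvolution F σ) : Even #σ.support :=
  even_iff_two_dvd.mpr <| Equiv.Perm.two_dvd_card_support <|
    Equiv.ext fun v => by simp [sq, hσ.involutive v]

lemma card_image_edge_add_card_support_div_two_le (hσ : IsMatchingInvolution F σ) :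
    #(univ.image fun v => s(v, σ v)) + #σ.support / 2 ≤ Fintype.card V := by
  set edge : V → Sym2 V := fun v => s(v, σ v)
  have hsupport : 2 * #(σ.support.image edge) ≤ #σ.support := by
    refine mul_card_image_le_card _ _ fun e he => ?_
    obtain ⟨v, hv, rfl⟩ := mem_image.mp he
    rw [← card_pair (Equiv.Perm.mem_support.mp hv).symm]
    refine card_le_card ?_
    have hv' := Equiv.Perm.mem_support.mp hv
    simp [insert_subset_iff, edge, hσ.involutive v, hv', hv'.symm]
  have himage : #(univ.image edge) ≤ #(σ.support.image edge) + #σ.supportᶜ := by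
    rw [← union_compl σ.support, image_union]
    exact (card_union_le _ _).trans (by gcongr; exact card_image_le)
  have hcompl := card_add_card_compl σ.support
  omega

lemma colorable_compl (hσ : IsMatchingInvolution F σ) :
    Fᶜ.Colorable (Fintype.card V - #σ.support / 2) := by
  let C : Fᶜ.Coloring (univ.image fun v => s(v, σ v)) := Coloring.mk
    (fun v => ⟨s(v, σ v), mem_image_of_mem _ (mem_univ v)⟩) fun {u w} huw h => by
      rcases Sym2.eq_iff.mp (congrArg Subtype.val h) with ⟨h, -⟩ | ⟨h, h'⟩
      · exact huw.ne h
      · subst h'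
        exact huw.2 (hσ.adj_of_ne u huw.ne')
  refine C.colorable.mono ?_
  rw [Fintype.card_coe]
  exact Nat.le_sub_of_add_le hσ.card_image_edge_add_card_support_div_two_le

end IsMatchingInvolution

variable [Fintype V] [DecidableEq V]

lemma exists_isMaximumMatching (F : SimpleGraph V) : ∃ σ, IsMaximumMatching F σ := by
  classical
  obtain ⟨σ, hσ, hmax⟩ := exists_max_image {σ | IsMatchingInvolution F σ}
    (fun σ => #σ.support) ⟨1, by simpa using .one F⟩
  simp only [mem_filter_univ] at hσ hmax
  exact ⟨σ, hσ, hmax⟩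

namespace IsMaximumMatching

lemma apply_ne_self_of_adj (hσ : IsMaximumMatching F σ) {a b : V} (hab : F.Adj a b)
    (ha : σ a = a) : σ b ≠ b := by
  intro hb
  have hdisj : σ.Disjoint (Equiv.swap a b) := fun v => by
    rw [or_iff_not_imp_right, ← ne_eq, Equiv.swap_apply_ne_self_iff]
    rintro ⟨-, rfl | rfl⟩ <;> assumption
  have hcard := hσ.card_support_le _ (hσ.mul (.swap hab) hdisj)
  rw [hdisj.card_support_mul, Equiv.Perm.card_support_swap hab.ne] at hcard
  omega

/- Exchanging `σ` and `τ` on `O` in both directions keeps the total number of covered vertices. -/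
lemma exists_eqOn_eqOn_compl (hσ : IsMaximumMatching F σ) (hτ : IsMaximumMatching F τ)
    {O : Set V} (hσO : Set.MapsTo σ O O) (hτO : Set.MapsTo τ O O) :
    ∃ ρ, IsMaximumMatching F ρ ∧ Set.EqOn ρ τ O ∧ Set.EqOn ρ σ Oᶜ := by
  obtain ⟨ρ, hρ, hρτ, hρσ⟩ := hσ.toIsMatchingInvolution.exists_eqOn_eqOn_compl
    hτ.toIsMatchingInvolution hσO hτO
  obtain ⟨π, hπ, hπσ, hπτ⟩ := hτ.toIsMatchingInvolution.exists_eqOn_eqOn_compl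
    hσ.toIsMatchingInvolution hτO hσO
  have hcard : #ρ.support + #π.support = #σ.support + #τ.support := by
    simp only [Equiv.Perm.support, card_filter, ← sum_add_distrib]
    refine sum_congr rfl fun v _ => ?_
    by_cases hv : v ∈ O
    · rw [hρτ hv, hπσ hv, add_comm]
    · rw [hρσ hv, hπτ hv]
  have hπ_le := hτ.card_support_le π hπ
  exact ⟨ρ, ⟨hρ, fun κ hκ => (hσ.card_support_le κ hκ).trans (by omega)⟩, hρτ, hρσ⟩

/- Gallai's lemma. If `x` is adjacent to `w` on the way to `y`, exchange `σ` with a maximum matching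
`τ` missing `w` on the component of `w` in the union of the two matchings. -/
theorem eq_of_reachable (hF : ∀ v, ∃ τ, IsMaximumMatching F τ ∧ τ v = v)
    (hσ : IsMaximumMatching F σ) {x y : V} (hxy : F.Reachable x y) (hx : σ x = x) (hy : σ y = y) :
    x = y := by
  obtain ⟨p⟩ := hxy
  induction p generalizing σ with
  | nil => rfl
  | @cons x w y hxw _ ih =>
    obtain ⟨τ, hτ, hw⟩ := hF w
    let O : Set V := {v | (σ * τ).SameCycle w v}
    have hσO : Set.MapsTo σ O O := by
      rintro _ ⟨i, rfl⟩
      exact ⟨1 - i, (left_apply_zpow_mul_of_involutive hσ.involutive hτ.involutive hw i).symm⟩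
    have hτO : Set.MapsTo τ O O := by
      rintro _ ⟨i, rfl⟩
      exact ⟨-i, (right_apply_zpow_mul_of_involutive hσ.involutive hτ.involutive hw i).symm⟩
    obtain ⟨ρ, hρ, hρτ, hρσ⟩ := hσ.exists_eqOn_eqOn_compl hτ hσO hτO
    have hwO : w ∈ O := .refl _ w
    have hρw : ρ w = w := (hρτ hwO).trans hw
    have hxO : x ∈ O := by
      by_contra hxO
      exact hρ.apply_ne_self_of_adj hxw ((hρσ hxO).trans hx) hρw
    have hyO : y ∈ O := by
      by_contra hyO
      exact hyO (ih hρ hρw ((hρσ hyO).trans hy) ▸ hwO)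
    exact eq_of_sameCycle_mul_of_involutive hσ.involutive hτ.involutive hw hxO hyO hx hy

variable [DecidableRel F.Adj]

lemma sum_degree_component_le {D : ℕ} (hD : ∀ v, F.degree v ≤ D)
    (hF : ∀ v, ∃ τ, IsMaximumMatching F τ ∧ τ v = v) (hσ : IsMaximumMatching F σ)
    [DecidableEq F.ConnectedComponent] (c : F.ConnectedComponent) :
    ∑ v with F.connectedComponentMk v = c, F.degree v ≤
      #{v ∈ σ.support | F.connectedComponentMk v = c} * (D + 1) := by
  set Q : Finset V := {v | F.connectedComponentMk v = c} with hQ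
  set q := #{v ∈ σ.support | F.connectedComponentMk v = c}
  have hfixed : #{v ∈ Q | σ v = v} ≤ 1 := by
    refine card_le_one.mpr fun x hx y hy => ?_
    simp only [hQ, mem_filter, mem_univ, true_and] at hx hy
    exact hσ.eq_of_reachable hF (ConnectedComponent.exact (hx.1.trans hy.1.symm)) hx.2 hy.2
  have hcard : #Q ≤ q + 1 := by
    have hmoved : {v ∈ Q | ¬ σ v = v} = {v ∈ σ.support | F.connectedComponentMk v = c} := by
      ext v
      simp [hQ, and_comm]
    rw [← card_filter_add_card_filter_not (s := Q) (fun v => σ v = v), hmoved, add_comm]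
    gcongr
  have hdeg (v : V) (hv : v ∈ Q) : F.degree v ≤ min q D := by
    have hneighbor : F.neighborFinset v ⊆ Q.erase v := fun w hw => by
      rw [mem_neighborFinset] at hw
      simp_all [hw.ne', ← ConnectedComponent.connectedComponentMk_eq_of_adj hw]
    have hle := card_le_card hneighbor
    rw [card_neighborFinset_eq_degree, card_erase_of_mem hv] at hle
    exact le_min (by omega) (hD v)
  calc ∑ v ∈ Q, F.degree v ≤ #Q * min q D := by simpa using sum_le_card_nsmul Q _ _ hdeg
    _ ≤ (q + 1) * min q D := by gcongr
    _ = q * min q D + min q D := by ring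
    _ ≤ q * D + q := by gcongr <;> simp
    _ = q * (D + 1) := by ring

lemma two_mul_card_edgeFinset_le_of_forall_exists_apply_eq_self {D : ℕ}
    (hD : ∀ v, F.degree v ≤ D) (hF : ∀ v, ∃ τ, IsMaximumMatching F τ ∧ τ v = v)
    (hσ : IsMaximumMatching F σ) : 2 * #F.edgeFinset ≤ #σ.support * (D + 1) := by
  classical
  rw [← F.sum_degrees_eq_twice_card_edges, ← sum_fiberwise univ F.connectedComponentMk,
    card_eq_sum_card_fiberwise (f := F.connectedComponentMk) (t := univ) (by simp), sum_mul]
  exact sum_le_sum fun c _ => sum_degree_component_le hD hF hσ c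

theorem two_mul_card_edgeFinset_le {D : ℕ} (hD : ∀ v, F.degree v ≤ D)
    (hσ : IsMaximumMatching F σ) : 2 * #F.edgeFinset ≤ #σ.support * (D + 1) := by
  induction hn : #σ.support using Nat.strong_induction_on generalizing F σ with
  | _ n ih
  subst hn
  by_cases hF : ∀ v, ∃ τ, IsMaximumMatching F τ ∧ τ v = v
  · exact two_mul_card_edgeFinset_le_of_forall_exists_apply_eq_self hD hF hσ
  push Not at hF
  obtain ⟨v, hv⟩ := hF
  obtain ⟨τ, hτ⟩ := exists_isMaximumMatching (F.deleteIncidenceSet v)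
  have hτF : IsMatchingInvolution F τ := hτ.mono (F.deleteIncidenceSet_le v)
  have hlt : #τ.support < #σ.support := by
    by_contra! hle
    exact hv τ ⟨hτF, fun κ hκ => (hσ.card_support_le κ hκ).trans hle⟩
      hτ.apply_eq_self_of_deleteIncidenceSet
  have hlt' : #τ.support + 2 ≤ #σ.support := by
    have := hτF.even_card_support
    have := hσ.even_card_support
    grind
  have hdeg (w : V) : (F.deleteIncidenceSet v).degree w ≤ D :=
    (degree_le_of_le (F.deleteIncidenceSet_le v)).trans (hD w)
  have hdelete := ih _ hlt hdeg hτ rfl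
  rw [card_edgeFinset_deleteIncidenceSet] at hdelete
  calc 2 * #F.edgeFinset ≤ #τ.support * (D + 1) + 2 * (D + 1) := by
        have := hD v
        omega
    _ = (#τ.support + 2) * (D + 1) := by ring
    _ ≤ #σ.support * (D + 1) := by gcongr

end IsMaximumMatching

end Matchings

section Colorings

variable {V : Type*} {G F : SimpleGraph V}

lemma card_le_degree_add_one_of_card_le_chromaticNumber {α : Type*} [Fintype α]
    (hG : (Fintype.card α : ℕ∞) ≤ G.chromaticNumber) (C : G.Coloring α) {v : V}
    [Fintype (G.neighborSet v)] (hv : ∀ w, C w = C v → w = v) :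
    Fintype.card α ≤ G.degree v + 1 := by
  classical
  have hcolor (i : α) (hi : i ≠ C v) : ∃ w, G.Adj v w ∧ C w = i := by
    by_contra! hmiss
    let C' : G.Coloring α := Coloring.mk (update C v i) fun {u w} huw => by
      rcases eq_or_ne u v with rfl | hu
      · simpa [huw.ne'] using (hmiss w huw).symm
      rcases eq_or_ne w v with rfl | hw
      · simpa [hu] using hmiss u huw.symm
      · simpa [hu, hw] using C.valid huw
    obtain ⟨u, hu⟩ := card_le_chromaticNumber_iff_forall_surjective.mp hG C' (C v)
    change update C v i u = C v at hu
    rcases eq_or_ne u v with rfl | huv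
    · exact hi (by simpa using hu)
    · exact huv (hv u (by simpa [huv] using hu))
  have hcover : (univ : Finset α) ⊆ insert (C v) ((G.neighborFinset v).image C) := fun i _ => by
    by_cases hi : i = C v
    · simp [hi]
    · simpa [hi] using hcolor i hi
  calc Fintype.card α ≤ #(insert (C v) ((G.neighborFinset v).image C)) := card_le_card hcover
    _ ≤ #((G.neighborFinset v).image C) + 1 := card_insert_le _ _
    _ ≤ G.degree v + 1 := by grw [card_image_le, card_neighborFinset_eq_degree]

variable [Fintype V] [DecidableRel F.Adj]

lemma degree_le_of_colorable_compl_deleteIncidenceSet {p : ℕ} {v : V}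
    (hF : ((Fintype.card V - p : ℕ) : ℕ∞) ≤ Fᶜ.chromaticNumber)
    (hv : (F.deleteIncidenceSet v)ᶜ.Colorable (Fintype.card V - p)) : F.degree v ≤ p := by
  classical
  obtain ⟨C⟩ := hv
  have halone (w : V) (hw : C w = C v) : w = v := by
    by_contra hwv
    exact C.valid (by simp [hwv, deleteIncidenceSet_adj]) hw
  have hle : Fᶜ ≤ (F.deleteIncidenceSet v)ᶜ := compl_le_compl (F.deleteIncidenceSet_le v)
  have hcompl := card_le_degree_add_one_of_card_le_chromaticNumber (G := Fᶜ) (v := v)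
    (by simpa using hF) (C.comp (.ofLE hle)) halone
  have hlt := F.degree_lt_card_verts v
  rw [Fintype.card_fin, degree_compl] at hcompl
  omega

lemma card_edgeFinset_le_of_forall_colorable_compl_deleteIncidenceSet {p : ℕ}
    (hF : ((Fintype.card V - p : ℕ) : ℕ∞) ≤ Fᶜ.chromaticNumber)
    (hcrit : ∀ v, (F.deleteIncidenceSet v)ᶜ.Colorable (Fintype.card V - p)) :
    #F.edgeFinset ≤ p * (p + 1) := by
  classical
  obtain ⟨σ, hσ⟩ := exists_isMaximumMatching F
  have hsupport : #σ.support ≤ 2 * p := by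
    have hcolors := le_chromaticNumber_iff_colorable.mp hF _ hσ.colorable_compl
    have hle := σ.support.card_le_univ
    obtain ⟨r, hr⟩ := hσ.even_card_support
    omega
  have hbound := hσ.two_mul_card_edgeFinset_le
    fun v => degree_le_of_colorable_compl_deleteIncidenceSet hF (hcrit v)
  have := Nat.mul_le_mul_right (p + 1) hsupport
  linarith

theorem card_edgeFinset_le_mul_of_le_chromaticNumber_compl {p d : ℕ} (hpd : p < d)
    (hd : ∀ v, F.degree v ≤ d)
    (hF : ((Fintype.card V - p : ℕ) : ℕ∞) ≤ Fᶜ.chromaticNumber) : #F.edgeFinset ≤ p * d := by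
  classical
  induction p generalizing F with
  | zero =>
    simpa using card_edgeFinset_le_of_forall_colorable_compl_deleteIncidenceSet hF
      fun v => colorable_of_fintype _
  | succ p ih =>
    by_cases hcrit : ∀ v, (F.deleteIncidenceSet v)ᶜ.Colorable (Fintype.card V - (p + 1))
    · exact (card_edgeFinset_le_of_forall_colorable_compl_deleteIncidenceSet hF hcrit).trans
        (Nat.mul_le_mul_left _ hpd)
    push Not at hcrit
    obtain ⟨v, hv⟩ := hcrit
    have hχ : ((Fintype.card V - p : ℕ) : ℕ∞) ≤ (F.deleteIncidenceSet v)ᶜ.chromaticNumber := by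
      refine le_chromaticNumber_iff_colorable.mpr fun m hm => ?_
      by_contra! hlt
      exact hv (hm.mono (by omega))
    have hdelete := ih (by omega)
      (fun w => (degree_le_of_le (F.deleteIncidenceSet_le v)).trans (hd w)) hχ
    rw [card_edgeFinset_deleteIncidenceSet] at hdelete
    have := hd v
    rw [add_mul]
    omega

end Colorings

section Connectivity

variable {V : Type*} [Fintype V]

lemma LConnected.le_degree_s10 {G : SimpleGraph V} [DecidableRel G.Adj] {ℓ : ℕ}
    (hG : LConnected G ℓ) (v : V) : ℓ ≤ G.degree v := by
  classical
  by_contra! hlt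
  rw [← card_neighborFinset_eq_degree] at hlt
  set s := G.neighborFinset v with hs
  obtain ⟨w, hw⟩ : ∃ w, w ∉ insert v s := by
    by_contra! hall
    have huniv : #(insert v s) = Fintype.card V := by rw [eq_univ_of_forall hall, card_univ]
    have := card_insert_le v s
    have := hG.1
    omega
  obtain ⟨hwv, hws⟩ : w ≠ v ∧ w ∉ s := by simpa using hw
  let v' : ((↑s : Set V)ᶜ : Set V) := ⟨v, by simp [hs]⟩
  let w' : ((↑s : Set V)ᶜ : Set V) := ⟨w, by simpa using hws⟩
  have : Nontrivial ((↑s : Set V)ᶜ : Set V) := ⟨w', v', by simpa [w', v'] using hwv⟩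
  have hconn := (hG.2 s hlt).preconnected
  obtain ⟨u, hu⟩ : v' ∈ (G.induce ((↑s : Set V)ᶜ)).support := by simp [hconn.support_eq_univ]
  exact u.2 (by simpa [hs] using hu)

end Connectivity

section EdgeCount

lemma choose_two_add (a b : ℕ) : (a + b).choose 2 = a.choose 2 + b.choose 2 + a * b := by
  simp [Nat.add_choose_eq, Nat.antidiagonal_succ]
  ring

lemma cast_mul_sub_pred {m ℓ : ℕ} (h : m ≤ ℓ + 1) :
    ((m * (ℓ - (m - 1)) : ℕ) : ℤ) = m * (ℓ - (m - 1)) := by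
  cases m with
  | zero => simp
  | succ m => simp [Nat.cast_sub (Nat.le_of_succ_le_succ h)]

lemma card_edgeFinset_add_card_edgeFinset_compl {V : Type*} [Fintype V] [DecidableEq V]
    (G : SimpleGraph V) [DecidableRel G.Adj] :
    #G.edgeFinset + #Gᶜ.edgeFinset = (Fintype.card V).choose 2 :=
  calc #G.edgeFinset + #Gᶜ.edgeFinset = #(G ⊔ Gᶜ).edgeFinset := by
        rw [edgeFinset_sup, card_union_of_disjoint (disjoint_edgeFinset.mpr disjoint_compl_right)]
    _ = #(⊤ : SimpleGraph V).edgeFinset := by congr!; exact sup_compl_eq_top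
    _ = (Fintype.card V).choose 2 := card_edgeFinset_top_eq_card_choose_two

end EdgeCount

theorem min_edges_gt_case_general {V : Type*} [Fintype V] (n k ℓ : ℕ) (hℓk : ℓ + 1 < k)
    (G : SimpleGraph V) [DecidableRel G.Adj] (hcard : Fintype.card V = n)
    (hchrom : k ≤ G.chromaticNumber) (hdeg : ∀ v, ℓ ≤ G.degree v) :
    (k.choose 2 + (n - k).choose 2 + (n - k : ℕ) * (ℓ - ((n - k : ℕ) - 1)) : ℤ) ≤
      Nat.card G.edgeSet := by
  classical
  have hk : k ≤ n := hcard ▸ mod_cast hchrom.trans G.colorable_of_fintype.chromaticNumber_le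
  obtain ⟨m, rfl⟩ := Nat.exists_eq_add_of_le hk
  obtain ⟨d, hd⟩ : ∃ d, k + m = d + ℓ + 1 := ⟨k + m - ℓ - 1, by omega⟩
  have hcompl : #Gᶜ.edgeFinset ≤ m * d := by
    refine card_edgeFinset_le_mul_of_le_chromaticNumber_compl (by omega) (fun v => ?_) ?_
    · have := hdeg v
      rw [degree_compl]
      omega
    · simpa [hcard] using hchrom
  have hsum := card_edgeFinset_add_card_edgeFinset_compl G
  rw [hcard, choose_two_add] at hsum
  rw [Nat.card_eq_fintype_card, ← edgeFinset_card, Nat.add_sub_cancel_left]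
  zify at hcompl hsum hd
  linear_combination hcompl - hsum - m * hd

/-- **Theorem 6 (lower bound).** If `G` is an `n`-vertex `k`-chromatic `ℓ`-connected graph with
`k - 1 > ℓ > 1` and `ℓ > n - k`, then
`|E(G)| ≥ C(k,2) + C(n-k,2) + (n-k)(ℓ - (n-k-1))`. -/
theorem min_edges_gt_case {V : Type*} [Fintype V] (n k ℓ : ℕ)
    (hℓk : ℓ + 1 < k) (hℓ : 1 < ℓ) (hn : n < k + ℓ)
    (G : SimpleGraph V) (hcard : Fintype.card V = n)
    (hchrom : G.chromaticNumber = k) (hconn : LConnected G ℓ) :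
    Nat.choose k 2 + Nat.choose (n - k) 2 + (n - k) * (ℓ - (n - k - 1)) ≤
      Nat.card G.edgeSet := by
  classical
  have h := min_edges_gt_case_general n k ℓ hℓk G hcard hchrom.ge hconn.le_degree_s10
  rw [← cast_mul_sub_pred (by omega)] at h
  exact_mod_cast h
end
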